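/- arXiv:1906.07437 — 6 statements merged into one kernel-verified Lean document; each statement's English description precedes it below -/
import Mathlib

section
/- (Reduction underlying NP-hardness of inverting a binary two-layer ReLU network.) Let φ be a 3-CNF formula over k Boolean variables with m clauses, and let W ∈ ℝ^{m×k} be its clause matrix. Then φ is satisfiable if and only if there exists z ∈ {−1,1}^k such that Σ_{i=1}^{m} ReLU((Wz)_i − 2) = 0. In particular, deciding whether the two-layer network G(z) = 𝟙ᵀ · ReLU(Wz − 2·𝟙) attains the output value 0 on some binary input z ∈ {−1,1}^k is equivalent to deciding satisfiability of φ. -/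
/-- ReLU applied to a real number. -/
noncomputable def relu (t : ℝ) : ℝ := max t 0

/-- A 3-CNF formula over `k` Boolean variables with `m` clauses: clause `i` consists of
three literals, each a pair of a variable index and a sign (`true` = positive literal). -/
structure CNF3 (k m : ℕ) where
  lit : Fin m → Fin 3 → Fin k × Bool

/-- A Boolean assignment `σ` satisfies the formula if every clause contains at least one
satisfied literal (a positive literal on variable `j` is satisfied iff `σ j = true`,
a negative literal iff `σ j = false`). -/
def CNF3.Satisfiable {k m : ℕ} (φ : CNF3 k m) : Prop :=
  ∃ σ : Fin k → Bool, ∀ i : Fin m, ∃ l : Fin 3, σ (φ.lit i l).1 = (φ.lit i l).2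

/-- The clause matrix `W ∈ ℝ^{m×k}`: entry `W i j` is the sum, over occurrences of
variable `j` in clause `i`, of `−1` for each positive literal and `+1` for each
negative literal. -/
noncomputable def CNF3.clauseMatrix {k m : ℕ} (φ : CNF3 k m) : Matrix (Fin m) (Fin k) ℝ :=
  Matrix.of fun i j =>
    ∑ l : Fin 3, if (φ.lit i l).1 = j then (if (φ.lit i l).2 then (-1 : ℝ) else 1) else 0

/-!
On a `±1` input, literal `l` of clause `i` contributes `-1` to `(Wz)ᵢ` if it is satisfied and `+1`
otherwise, so `(Wz)ᵢ = 3 - 2s` where `s` is the number of satisfied literals. Hence `(Wz)ᵢ ≤ 1`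
for a satisfied clause and `(Wz)ᵢ = 3` for a violated one, and the threshold `2` separates the two.
-/

theorem relu_nonneg (t : ℝ) : 0 ≤ relu t :=
  le_max_right t 0

theorem relu_eq_zero_iff {t : ℝ} : relu t = 0 ↔ t ≤ 0 :=
  max_eq_right_iff

theorem sum_relu_eq_zero_iff {ι : Type*} {s : Finset ι} {f : ι → ℝ} :
    ∑ i ∈ s, relu (f i) = 0 ↔ ∀ i ∈ s, f i ≤ 0 := by
  simp only [Finset.sum_eq_zero_iff_of_nonneg fun i _ => relu_nonneg (f i), relu_eq_zero_iff]

section SignSums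

variable {ι R : Type*} (s : Finset ι) (p : ι → Prop) [DecidablePred p]

theorem sum_ite_neg_one_one [Ring R] :
    ∑ i ∈ s, (if p i then (-1 : R) else 1) = s.card - 2 * (s.filter p).card := by
  have ite_eq (i : ι) : (if p i then (-1 : R) else 1) = 1 - 2 * (if p i then 1 else 0) := by
    split_ifs <;> norm_num
  simp only [ite_eq, Finset.sum_sub_distrib, ← Finset.mul_sum, Finset.sum_boole,
    Finset.sum_const, nsmul_one]

theorem sum_ite_neg_one_one_le_iff_exists [Ring R] [LinearOrder R] [IsStrictOrderedRing R]
    {t : R} (le_t : (s.card : R) - 2 ≤ t) (t_lt : t < s.card) :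
    ∑ i ∈ s, (if p i then (-1 : R) else 1) ≤ t ↔ ∃ i ∈ s, p i := by
  rw [sum_ite_neg_one_one, ← Finset.filter_nonempty_iff]
  constructor
  · intro sum_le
    by_contra filter_empty
    rw [Finset.not_nonempty_iff_eq_empty] at filter_empty
    rw [filter_empty, Finset.card_empty, Nat.cast_zero, mul_zero, sub_zero] at sum_le
    exact sum_le.not_gt t_lt
  · intro filter_nonempty
    have one_le_card : (1 : R) ≤ (s.filter p).card :=
      mod_cast Finset.one_le_card.mpr filter_nonempty
    calc (s.card : R) - 2 * (s.filter p).card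
        ≤ s.card - 2 := sub_le_sub_left (le_mul_of_one_le_right zero_le_two one_le_card) _
      _ ≤ t := le_t

end SignSums

/-- The encoding of truth values as signs: `true` is `1` and `false` is `-1`. Composing with it
turns a Boolean assignment into a binary network input. -/
def boolSign (b : Bool) : ℝ := if b then 1 else -1

theorem neg_boolSign_mul_boolSign (a b : Bool) :
    -boolSign a * boolSign b = if b = a then -1 else 1 := by
  cases a <;> cases b <;> norm_num [boolSign]

theorem range_boolSign : Set.range boolSign = {-1, 1} := by
  ext x
  simp [boolSign]

theorem exists_neg_one_or_one_and_iff {ι : Type*} (P : (ι → ℝ) → Prop) :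
    (∃ z : ι → ℝ, (∀ j, z j = -1 ∨ z j = 1) ∧ P z) ↔ ∃ σ : ι → Bool, P (boolSign ∘ σ) := by
  have binary_iff (x : ℝ) : x = -1 ∨ x = 1 ↔ x ∈ Set.range boolSign := by
    rw [range_boolSign, Set.mem_insert_iff, Set.mem_singleton_iff]
  simp only [binary_iff]
  constructor
  · rintro ⟨z, z_mem_range, hPz⟩
    choose σ hσ using z_mem_range
    obtain rfl : boolSign ∘ σ = z := funext hσ
    exact ⟨σ, hPz⟩
  · rintro ⟨σ, hPσ⟩
    exact ⟨boolSign ∘ σ, fun j => Set.mem_range_self (σ j), hPσ⟩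

namespace CNF3

variable {k m : ℕ} (φ : CNF3 k m)

/-- The assignment `σ` satisfies `φ`, so that `φ.Satisfiable` is by definition
`∃ σ, φ.SatisfiedBy σ`. -/
def SatisfiedBy (σ : Fin k → Bool) : Prop :=
  ∀ i : Fin m, ∃ l : Fin 3, σ (φ.lit i l).1 = (φ.lit i l).2

/-- The two-layer network `G(z) = 𝟙ᵀ · ReLU(Wz - 2·𝟙)` attached to `φ`, defined on all real
inputs. -/
noncomputable def network (z : Fin k → ℝ) : ℝ :=
  ∑ i : Fin m, relu (φ.clauseMatrix.mulVec z i - 2)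

theorem clauseMatrix_mulVec (z : Fin k → ℝ) (i : Fin m) :
    φ.clauseMatrix.mulVec z i = ∑ l : Fin 3, -boolSign (φ.lit i l).2 * z (φ.lit i l).1 := by
  have clauseMatrix_apply (j : Fin k) : φ.clauseMatrix i j =
      ∑ l : Fin 3, if (φ.lit i l).1 = j then -boolSign (φ.lit i l).2 else 0 := by
    simp only [clauseMatrix, Matrix.of_apply, boolSign, neg_ite, neg_neg]
  simp only [Matrix.mulVec, dotProduct, clauseMatrix_apply, Finset.sum_mul]
  rw [Finset.sum_comm]
  simp only [ite_mul, zero_mul, Finset.sum_ite_eq, Finset.mem_univ, if_true]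

theorem clauseMatrix_mulVec_boolSign_comp (σ : Fin k → Bool) (i : Fin m) :
    φ.clauseMatrix.mulVec (boolSign ∘ σ) i =
      ∑ l : Fin 3, if σ (φ.lit i l).1 = (φ.lit i l).2 then (-1 : ℝ) else 1 := by
  simp only [clauseMatrix_mulVec, Function.comp_apply, neg_boolSign_mul_boolSign]

theorem clauseMatrix_mulVec_boolSign_comp_le_two_iff (σ : Fin k → Bool) (i : Fin m) :
    φ.clauseMatrix.mulVec (boolSign ∘ σ) i ≤ 2 ↔
      ∃ l : Fin 3, σ (φ.lit i l).1 = (φ.lit i l).2 := by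
  rw [clauseMatrix_mulVec_boolSign_comp,
    sum_ite_neg_one_one_le_iff_exists _ _ (by norm_num) (by norm_num)]
  simp only [Finset.mem_univ, true_and]

theorem network_boolSign_comp_eq_zero_iff (σ : Fin k → Bool) :
    φ.network (boolSign ∘ σ) = 0 ↔ φ.SatisfiedBy σ := by
  simp only [network, SatisfiedBy, sum_relu_eq_zero_iff, Finset.mem_univ, true_imp_iff,
    sub_nonpos, clauseMatrix_mulVec_boolSign_comp_le_two_iff]

end CNF3

/-- **Reduction underlying NP-hardness of inverting a binary two-layer ReLU network.**
A 3-CNF formula `φ` with clause matrix `W` is satisfiable iff there exists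
`z ∈ {−1,1}^k` with `Σ_{i=1}^{m} ReLU((Wz)_i − 2) = 0`, i.e. iff the two-layer
network `G(z) = 𝟙ᵀ · ReLU(Wz − 2·𝟙)` attains the value `0` on some binary input. -/
theorem cnf3_satisfiable_iff_binary_network_inversion
    (k m : ℕ) (φ : CNF3 k m) :
    φ.Satisfiable ↔
      ∃ z : Fin k → ℝ, (∀ j, z j = -1 ∨ z j = 1) ∧
        ∑ i : Fin m, relu (φ.clauseMatrix.mulVec z i - 2) = 0 := by
  calc φ.Satisfiable
      ↔ ∃ σ, φ.SatisfiedBy σ := Iff.rfl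
    _ ↔ ∃ σ : Fin k → Bool, φ.network (boolSign ∘ σ) = 0 :=
      exists_congr fun σ => (φ.network_boolSign_comp_eq_zero_iff σ).symm
    _ ↔ ∃ z : Fin k → ℝ, (∀ j, z j = -1 ∨ z j = 1) ∧ φ.network z = 0 :=
      (exists_neg_one_or_one_and_iff (φ.network · = 0)).symm
end

section
/- (Injectivity of a random expansive ReLU layer at a given point.) Let k, n be positive integers with n ≥ (21/10)·k, let z* ∈ ℝ^k be fixed, and let W be a random n×k matrix with i.i.d. standard Gaussian entries. Then with probability at least 1 − exp(−2(n/2 − k)²/n), every z ∈ ℝ^k with ReLU(Wz) = ReLU(Wz*) satisfies z = z*; that is, the ReLU layer z ↦ ReLU(Wz) is invertible at z*, and z* is recovered as the unique solution of the linear system formed by the positive coordinates of the observation. -/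
open MeasureTheory ProbabilityTheory

/-- The law of a random `n × k` matrix (viewed as `Fin n → Fin k → ℝ`) with i.i.d.
standard Gaussian entries: the product over all entries of `N(0,1)`. -/
noncomputable def stdGaussianMatrix (n k : ℕ) : Measure (Fin n → Fin k → ℝ) :=
  Measure.pi fun _ : Fin n => Measure.pi fun _ : Fin k => gaussianReal 0 1

/-!
The law of `W` is invariant under changing the signs of rows, so the failure probability is the
average, over the `2 ^ n` sign patterns, of the indicator that the re-signed matrix fails at `z*`.
Almost surely any `k` rows of `W` are linearly independent. For such a `W` the failing patterns
shatter no set `S` of `k + 1` rows: the rows in `S` satisfy a linear relation `∑ cᵢ wᵢ = 0` with all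
`cᵢ ≠ 0`, and for the pattern that makes every `⟨wᵢ, z*⟩` positive (or makes `cᵢ` positive, where
`⟨wᵢ, z*⟩ = 0`), a collision `z` has `cᵢ ⟨wᵢ, z - z*⟩ ≤ 0` for all `i ∈ S`. These terms add up to
zero, so each vanishes, and `z = z*` because the rows in `S` span. By the Sauer–Shelah lemma at most
`∑_{i ≤ k} (n choose i)` patterns fail, and Chernoff's bound for binomial coefficients concludes.
-/

open Finset Module

section BinomialTail

theorem sum_choose_mul_exp_eq_cosh_pow (n : ℕ) (s : ℝ) :
    ∑ i ∈ range (n + 1), (n.choose i : ℝ) * Real.exp (s * (n - 2 * i)) =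
      (2 * Real.cosh s) ^ n := by
  have two_mul_cosh : 2 * Real.cosh s = Real.exp (-s) + Real.exp s := by
    rw [Real.cosh_eq]; ring
  rw [two_mul_cosh, add_pow]
  refine sum_congr rfl fun i hi => ?_
  have hin : i ≤ n := mem_range_succ_iff.1 hi
  rw [← Real.exp_nat_mul, ← Real.exp_nat_mul, ← Real.exp_add, Nat.cast_sub hin, mul_comm]
  congr 2
  ring

theorem sum_Iic_choose_le_exp_mul_cosh_pow {n k : ℕ} (hkn : k ≤ n) {s : ℝ} (hs : 0 ≤ s) :
    ∑ i ∈ Iic k, (n.choose i : ℝ) ≤ Real.exp (-s * (n - 2 * k)) * (2 * Real.cosh s) ^ n := by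
  have one_le_weight {i : ℕ} (hi : i ∈ Iic k) :
      1 ≤ Real.exp (-s * (n - 2 * k)) * Real.exp (s * (n - 2 * i)) := by
    have hik : (i : ℝ) ≤ k := by exact_mod_cast mem_Iic.1 hi
    rw [← Real.exp_add]
    exact Real.one_le_exp (by nlinarith)
  calc ∑ i ∈ Iic k, (n.choose i : ℝ)
      ≤ ∑ i ∈ Iic k, (n.choose i : ℝ) *
          (Real.exp (-s * (n - 2 * k)) * Real.exp (s * (n - 2 * i))) :=
        sum_le_sum fun i hi => le_mul_of_one_le_right (by positivity) (one_le_weight hi)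
    _ ≤ ∑ i ∈ range (n + 1), (n.choose i : ℝ) *
          (Real.exp (-s * (n - 2 * k)) * Real.exp (s * (n - 2 * i))) :=
        sum_le_sum_of_subset_of_nonneg
          (fun i hi => mem_range_succ_iff.2 ((mem_Iic.1 hi).trans hkn))
          (fun _ _ _ => by positivity)
    _ = Real.exp (-s * (n - 2 * k)) * (2 * Real.cosh s) ^ n := by
        simp_rw [← sum_choose_mul_exp_eq_cosh_pow, mul_sum, mul_left_comm]

theorem sum_Iic_choose_le_two_pow_mul_exp {n k : ℕ} (hkn : 2 * k ≤ n) :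
    ∑ i ∈ Iic k, (n.choose i : ℝ) ≤
      2 ^ n * Real.exp (-2 * ((n : ℝ) / 2 - (k : ℝ)) ^ 2 / (n : ℝ)) := by
  rcases n.eq_zero_or_pos with rfl | hn
  · obtain rfl : k = 0 := by omega
    simp [show Iic 0 = {0} from rfl]
  have n_sub_nonneg : (0 : ℝ) ≤ n - 2 * k := by
    rw [sub_nonneg]; exact_mod_cast hkn
  -- The minimiser of the exponent `-s (n - 2k) + n s² / 2`.
  set s : ℝ := (n - 2 * k) / n with hs
  calc ∑ i ∈ Iic k, (n.choose i : ℝ)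
      ≤ Real.exp (-s * (n - 2 * k)) * (2 * Real.cosh s) ^ n :=
        sum_Iic_choose_le_exp_mul_cosh_pow (by omega) (by positivity)
    _ ≤ Real.exp (-s * (n - 2 * k)) * (2 * Real.exp (s ^ 2 / 2)) ^ n := by
        have := Real.cosh_pos s
        gcongr
        exact Real.cosh_le_exp_half_sq s
    _ = 2 ^ n * Real.exp (-s * (n - 2 * k) + n * (s ^ 2 / 2)) := by
        rw [mul_pow, ← Real.exp_nat_mul, Real.exp_add]; ring
    _ = 2 ^ n * Real.exp (-2 * ((n : ℝ) / 2 - (k : ℝ)) ^ 2 / (n : ℝ)) := by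
        congr 2
        rw [hs]
        field_simp
        ring

end BinomialTail

section NullSets

theorem measure_pi_eq_zero_of_forall_update {ι : Type*} [Fintype ι] [DecidableEq ι]
    {X : ι → Type*} [∀ i, MeasurableSpace (X i)] (μ : ∀ i, Measure (X i)) [∀ i, SigmaFinite (μ i)]
    {s : Set (∀ i, X i)} (hs : MeasurableSet s) (i : ι)
    (h : ∀ x, μ i {t | Function.update x i t ∈ s} = 0) : Measure.pi μ s = 0 := by
  have marginal_eq_zero : ∫⋯∫⁻_{i}, s.indicator 1 ∂μ = ∫⋯∫⁻_{i}, 0 ∂μ := by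
    funext x
    simp only [lmarginal_singleton, Pi.zero_apply, lintegral_zero]
    have hmeas : MeasurableSet {t | Function.update x i t ∈ s} := (measurable_update x) hs
    exact (lintegral_indicator_one hmeas).trans (h x)
  rw [← lintegral_indicator_one hs,
    lintegral_eq_of_lmarginal_eq {i} (measurable_one.indicator hs) measurable_zero marginal_eq_zero]
  simp

theorem exists_single_notMem_of_ne_top {R ι : Type*} [Semiring R] [Finite ι] [DecidableEq ι]
    {p : Submodule R (ι → R)} (hp : p ≠ ⊤) : ∃ j, Pi.single j 1 ∉ p := by
  contrapose! hp
  rw [eq_top_iff, ← (Pi.basisFun R ι).span_eq, Submodule.span_le]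
  rintro _ ⟨j, rfl⟩
  simpa using hp j

theorem measure_pi_submodule_eq_zero {ι : Type*} [Fintype ι] (μ : ι → Measure ℝ)
    [∀ i, SigmaFinite (μ i)] [∀ i, NullSingletonClass (μ i)] {p : Submodule ℝ (ι → ℝ)}
    (hp : p ≠ ⊤) : Measure.pi μ p = 0 := by
  classical
  obtain ⟨j, hj⟩ := exists_single_notMem_of_ne_top hp
  refine measure_pi_eq_zero_of_forall_update μ p.closed_of_finiteDimensional.measurableSet j
    fun x => Set.Subsingleton.measure_zero (fun t ht u hu => ?_) _
  have update_sub_update :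
      Function.update x j t - Function.update x j u = (t - u) • Pi.single j 1 := by
    rw [← Function.update_sub, sub_self, ← Pi.single_smul', Pi.single, smul_eq_mul, mul_one]
  by_contra htu
  refine hj ((p.smul_mem_iff (sub_ne_zero.2 htu)).1 ?_)
  rw [← update_sub_update]
  exact p.sub_mem ht hu

end NullSets

section GeneralPosition

/-- A family of vectors is in linear general position if each of its subfamilies of size at most
the dimension of the space is linearly independent. -/
def LinearGeneralPosition (K : Type*) {ι E : Type*} [DivisionRing K] [AddCommGroup E] [Module K E]
    (w : ι → E) : Prop :=
  ∀ s : Finset ι, #s ≤ finrank K E → LinearIndepOn K w s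

namespace LinearGeneralPosition

variable {K ι E : Type*} [DivisionRing K] [AddCommGroup E] [Module K E] [FiniteDimensional K E]
  {w : ι → E} {s : Finset ι}

theorem span_image_eq_top (hw : LinearGeneralPosition K w) (hs : finrank K E ≤ #s) :
    Submodule.span K (w '' s) = ⊤ := by
  obtain ⟨t, hts, ht⟩ := exists_subset_card_eq hs
  have span_t : Submodule.span K (Set.range fun i : t => w i) = ⊤ :=
    LinearIndependent.span_eq_top_of_card_eq_finrank' (hw t ht.le) (by simpa using ht)
  rw [eq_top_iff, ← span_t]
  refine Submodule.span_mono ?_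
  rintro _ ⟨i, rfl⟩
  exact ⟨i, hts i.2, rfl⟩

theorem exists_sum_smul_eq_zero (hw : LinearGeneralPosition K w) (hs : #s = finrank K E + 1) :
    ∃ c : ι → K, ∑ i ∈ s, c i • w i = 0 ∧ ∀ i ∈ s, c i ≠ 0 := by
  classical
  have not_indep : ¬ LinearIndepOn K w s := fun h => by
    have := LinearIndependent.fintype_card_le_finrank h
    simp only [SetLike.coe_sort_coe, Fintype.card_coe] at this
    omega
  rw [linearIndepOn_finset_iff] at not_indep
  push Not at not_indep
  obtain ⟨c, hsum, j, hj, hcj⟩ := not_indep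
  refine ⟨c, hsum, fun i hi hci => hcj ?_⟩
  have indep_erase := linearIndepOn_finset_iff.1
    (hw (s.erase i) (by rw [card_erase_of_mem hi]; omega))
  have sum_erase : ∑ l ∈ s.erase i, c l • w l = 0 := by
    rw [← hsum, sum_erase _ (by rw [hci, zero_smul])]
  exact indep_erase c sum_erase j (mem_erase.2 ⟨fun hji => hcj (hji ▸ hci), hj⟩)

end LinearGeneralPosition

section AlmostSurely

variable {ι E : Type*} [NormedAddCommGroup E] [NormedSpace ℝ E]
  [FiniteDimensional ℝ E] [MeasurableSpace E] [BorelSpace E]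

theorem measurableSet_linearIndepOn [Countable ι] (s : Finset ι) :
    MeasurableSet {w : ι → E | LinearIndepOn ℝ w s} := by
  have := FiniteDimensional.proper_real E
  have restrict_continuous : Continuous fun (w : ι → E) (i : s) => w i := by fun_prop
  exact (isOpen_setOfPred_linearIndependent.preimage restrict_continuous).measurableSet

variable [Fintype ι] (μ : ι → Measure E) [∀ i, SigmaFinite (μ i)]

theorem ae_linearIndepOn (hμ : ∀ i, ∀ p : Submodule ℝ E, p ≠ ⊤ → μ i p = 0) (s : Finset ι)
    (hs : #s ≤ finrank ℝ E) :
    ∀ᵐ w ∂Measure.pi μ, LinearIndepOn ℝ w s := by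
  classical
  induction s using Finset.induction_on with
  | empty => simp
  | insert i s hi ih =>
    rw [card_insert_of_notMem hi] at hs
    have ae_insert : ∀ᵐ w ∂Measure.pi μ,
        LinearIndepOn ℝ w s → LinearIndepOn ℝ w (insert i s : Finset ι) := by
      refine measure_pi_eq_zero_of_forall_update μ
        ((measurableSet_linearIndepOn s).imp (measurableSet_linearIndepOn _)).compl i fun w => ?_
      have span_ne_top : Submodule.span ℝ (w '' s) ≠ ⊤ := fun htop => by
        have := finrank_span_finset_le_card (R := ℝ) (s.image w)
        rw [coe_image, Set.finrank, htop, finrank_top] at this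
        have := card_image_le (s := s) (f := w)
        omega
      refine measure_mono_null (fun v hv => ?_) (hμ i _ span_ne_top)
      by_contra hv_notMem
      have image_update : Function.update w i v '' s = w '' s :=
        Set.image_congr fun j hj => Function.update_of_ne (ne_of_mem_of_not_mem hj hi) _ _
      refine hv fun hindep => ?_
      rw [coe_insert]
      exact hindep.insert (by rwa [image_update, Function.update_self])
    filter_upwards [ae_insert, ih (by omega)] with w hstep hw using hstep hw

theorem ae_linearGeneralPosition (hμ : ∀ i, ∀ p : Submodule ℝ E, p ≠ ⊤ → μ i p = 0) :
    ∀ᵐ w ∂Measure.pi μ, LinearGeneralPosition ℝ w :=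
  ae_all_iff.2 fun s => Filter.eventually_imp_distrib_left.2 (ae_linearIndepOn μ hμ s)

end AlmostSurely

end GeneralPosition

section Symmetrization

open Classical in
theorem card_mul_measure_le_of_ae_card_le {Ω α : Type*} [MeasurableSpace Ω] [Fintype α]
    {μ : Measure Ω} [IsProbabilityMeasure μ] {T : α → Ω → Ω}
    (hT : ∀ a, MeasurePreserving (T a) μ μ) {B : Set Ω} (hB : MeasurableSet B) {M : ℕ}
    (hM : ∀ᵐ ω ∂μ, #{a | T a ω ∈ B} ≤ M) : Fintype.card α * μ B ≤ M := by
  have measurableSet_preimage (a : α) : MeasurableSet (T a ⁻¹' B) := (hT a).measurable hB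
  calc Fintype.card α * μ B
      = ∑ a, μ (T a ⁻¹' B) := by
        simp [fun a => (hT a).measure_preimage hB.nullMeasurableSet]
    _ = ∫⁻ ω, ∑ a, (T a ⁻¹' B).indicator 1 ω ∂μ := by
        rw [lintegral_finsetSum _ fun a _ => measurable_one.indicator (measurableSet_preimage a)]
        simp only [lintegral_indicator_one (measurableSet_preimage _)]
    _ ≤ ∫⁻ _, M ∂μ := by
        refine lintegral_mono_ae (hM.mono fun ω hω => ?_)
        simpa [Set.indicator_apply] using Nat.cast_le (α := ENNReal).2 hω
    _ = M := by simp

open Classical in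
theorem one_sub_div_card_le_measure_of_ae_card_le {Ω α : Type*} [MeasurableSpace Ω] [Fintype α]
    [Nonempty α] {μ : Measure Ω} [IsProbabilityMeasure μ] {T : α → Ω → Ω}
    (hT : ∀ a, MeasurePreserving (T a) μ μ) {G : Set Ω} {M : ℕ}
    (hM : ∀ᵐ ω ∂μ, #{a | T a ω ∉ G} ≤ M) : 1 - (M : ENNReal) / Fintype.card α ≤ μ G := by
  -- `G` need not be measurable, so the bound is applied to its measurable hull.
  set H := toMeasurable μ G
  have hH : MeasurableSet H := measurableSet_toMeasurable μ G
  have ae_card_compl_le : ∀ᵐ ω ∂μ, #{a | T a ω ∈ Hᶜ} ≤ M :=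
    hM.mono fun ω hω => hω.trans' <| card_le_card <| monotone_filter_right _
      fun a _ ha hG => ha (subset_toMeasurable μ G hG)
  have compl_le : μ Hᶜ ≤ M / Fintype.card α := by
    rw [ENNReal.le_div_iff_mul_le (by simp) (by simp), mul_comm]
    refine card_mul_measure_le_of_ae_card_le hT hH.compl ?_
    convert ae_card_compl_le
  calc 1 - (M : ENNReal) / Fintype.card α
      ≤ 1 - μ Hᶜ := tsub_le_tsub_left compl_le 1
    _ = μ H := by
        rw [prob_compl_eq_one_sub hH, ENNReal.sub_sub_cancel ENNReal.one_ne_top prob_le_one]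
    _ = μ G := measure_toMeasurable G

theorem measurePreserving_piecewise_neg {ι E : Type*} [Fintype ι] [DecidableEq ι]
    [MeasurableSpace E] [Neg E] [MeasurableNeg E] (μ : ι → Measure E)
    [∀ i, SigmaFinite (μ i)] [∀ i, (μ i).IsNegInvariant] (A : Finset ι) :
    MeasurePreserving (fun w => A.piecewise w (-w)) (Measure.pi μ) (Measure.pi μ) := by
  refine measurePreserving_pi μ μ (f := fun i v => if i ∈ A then v else -v) fun i => ?_
  split_ifs
  · exact MeasurePreserving.id _
  · exact Measure.measurePreserving_neg _

end Symmetrization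

section Shattering

theorem linearMap_eq_zero_of_forall_mul_nonpos {K ι E : Type*} [Field K] [LinearOrder K]
    [IsStrictOrderedRing K] [AddCommGroup E] [Module K E] {w : ι → E} {s : Finset ι} {c : ι → K}
    (hspan : Submodule.span K (w '' s) = ⊤) (hsum : ∑ i ∈ s, c i • w i = 0)
    (hc : ∀ i ∈ s, c i ≠ 0) {f : E →ₗ[K] K} (hf : ∀ i ∈ s, c i * f (w i) ≤ 0) : f = 0 := by
  have sum_eq_zero : ∑ i ∈ s, c i * f (w i) = 0 := by
    simpa using congrArg f hsum
  refine LinearMap.ext_on hspan ?_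
  rintro _ ⟨i, hi, rfl⟩
  exact (mul_eq_zero.1 ((sum_eq_zero_iff_of_nonpos hf).1 sum_eq_zero i hi)).resolve_left (hc i hi)

theorem mul_sub_nonpos_of_relu_eq {a b c : ℝ} (ha : 0 < a ∨ a = 0 ∧ 0 < c)
    (h : relu b = relu a) : c * (b - a) ≤ 0 := by
  unfold relu at h
  rcases ha with ha | ⟨rfl, hc⟩
  · have hba : b = a := by
      rw [max_eq_left ha.le] at h
      rcases max_choice b 0 with hb | hb <;> linarith
    simp [hba]
  · have hb : b ≤ 0 := by simpa using h
    rw [sub_zero]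
    exact mul_nonpos_of_nonneg_of_nonpos hc.le hb

variable {ι κ : Type*} [Fintype κ]

/-- The ReLU layer with rows `W i` is injective at `zstar`: no other point has the same image. -/
def ReluInjectiveAt (W : ι → κ → ℝ) (zstar : κ → ℝ) : Prop :=
  ∀ z : κ → ℝ, (∀ i, relu ((Matrix.of W).mulVec z i) = relu ((Matrix.of W).mulVec zstar i)) →
    z = zstar

variable [DecidableEq ι]

open Classical in
/-- The sign patterns for which injectivity at `zstar` fails. A pattern is encoded by the set `A`
of rows whose sign is kept; the rows outside `A` are negated. -/
noncomputable def collisionPatterns [Fintype ι] (W : ι → κ → ℝ) (zstar : κ → ℝ) :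
    Finset (Finset ι) :=
  {A | ¬ ReluInjectiveAt (A.piecewise W (-W)) zstar}

theorem mul_dotProduct_sub_nonpos_of_relu_eq {W : ι → κ → ℝ} {z zstar : κ → ℝ} {A : Finset ι}
    {i : ι} {c : ℝ} (hc : c ≠ 0) (hA : i ∈ A ↔ 0 < W i ⬝ᵥ zstar ∨ W i ⬝ᵥ zstar = 0 ∧ 0 < c)
    (h : relu ((Matrix.of (A.piecewise W (-W))).mulVec z i) =
      relu ((Matrix.of (A.piecewise W (-W))).mulVec zstar i)) :
    c * (W i ⬝ᵥ (z - zstar)) ≤ 0 := by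
  simp only [Matrix.mulVec, Matrix.of_apply] at h
  rw [dotProduct_sub]
  by_cases hi : i ∈ A
  · rw [piecewise_eq_of_mem _ _ _ hi] at h
    exact mul_sub_nonpos_of_relu_eq (hA.1 hi) h
  · rw [piecewise_eq_of_notMem _ _ _ hi, Pi.neg_apply, neg_dotProduct, neg_dotProduct] at h
    have neg_pattern : 0 < -(W i ⬝ᵥ zstar) ∨ -(W i ⬝ᵥ zstar) = 0 ∧ 0 < -c := by
      grind
    have := mul_sub_nonpos_of_relu_eq neg_pattern h
    linarith

theorem not_shatters_collisionPatterns [Fintype ι] {W : ι → κ → ℝ}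
    (hW : LinearGeneralPosition ℝ W) (zstar : κ → ℝ) {s : Finset ι}
    (hs : #s = Fintype.card κ + 1) : ¬ (collisionPatterns W zstar).Shatters s := by
  classical
  intro hshatters
  rw [← finrank_fintype_fun_eq_card ℝ] at hs
  obtain ⟨c, hsum, hc⟩ := hW.exists_sum_smul_eq_zero hs
  obtain ⟨A, hA, hsA⟩ := hshatters
    (filter_subset (fun i => 0 < W i ⬝ᵥ zstar ∨ W i ⬝ᵥ zstar = 0 ∧ 0 < c i) s)
  have mem_pattern_iff (i) (hi : i ∈ s) :
      i ∈ A ↔ 0 < W i ⬝ᵥ zstar ∨ W i ⬝ᵥ zstar = 0 ∧ 0 < c i := by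
    simpa [hi] using Finset.ext_iff.1 hsA i
  refine (mem_filter.1 hA).2 fun z hz => ?_
  have mul_nonpos (i) (hi : i ∈ s) : c i * dotProductEquiv ℝ κ (z - zstar) (W i) ≤ 0 := by
    rw [dotProductEquiv_apply_apply, dotProduct_comm]
    exact mul_dotProduct_sub_nonpos_of_relu_eq (hc i hi) (mem_pattern_iff i hi) (hz i)
  have functional_eq_zero : dotProductEquiv ℝ κ (z - zstar) = 0 :=
    linearMap_eq_zero_of_forall_mul_nonpos (hW.span_image_eq_top (by omega)) hsum hc mul_nonpos
  exact sub_eq_zero.1 ((dotProductEquiv ℝ κ).map_eq_zero_iff.1 functional_eq_zero)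

theorem vcDim_collisionPatterns_le [Fintype ι] {W : ι → κ → ℝ}
    (hW : LinearGeneralPosition ℝ W) (zstar : κ → ℝ) :
    (collisionPatterns W zstar).vcDim ≤ Fintype.card κ := by
  refine Finset.sup_le fun s hs => ?_
  by_contra! hlt
  obtain ⟨t, hts, ht⟩ := exists_subset_card_eq (Nat.succ_le_of_lt hlt)
  exact not_shatters_collisionPatterns hW zstar ht ((mem_shatterer.1 hs).mono_right hts)

theorem card_collisionPatterns_le [Fintype ι] {W : ι → κ → ℝ}
    (hW : LinearGeneralPosition ℝ W) (zstar : κ → ℝ) :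
    #(collisionPatterns W zstar) ≤ ∑ i ∈ Iic (Fintype.card κ), (Fintype.card ι).choose i :=
  calc #(collisionPatterns W zstar)
      ≤ #(collisionPatterns W zstar).shatterer := card_le_card_shatterer _
    _ ≤ ∑ i ∈ Iic (collisionPatterns W zstar).vcDim, (Fintype.card ι).choose i :=
        card_shatterer_le_sum_vcDim
    _ ≤ ∑ i ∈ Iic (Fintype.card κ), (Fintype.card ι).choose i :=
        sum_le_sum_of_subset (Iic_subset_Iic.2 (vcDim_collisionPatterns_le hW zstar))

end Shattering

section RandomLayer

variable {ι κ : Type*} [Fintype ι] [Fintype κ] (μ : ι → Measure (κ → ℝ))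
  [∀ i, IsProbabilityMeasure (μ i)] [∀ i, (μ i).IsNegInvariant]

theorem one_sub_sum_choose_div_le_measure_reluInjectiveAt
    (hμ : ∀ i, ∀ p : Submodule ℝ (κ → ℝ), p ≠ ⊤ → μ i p = 0) (zstar : κ → ℝ) :
    1 - ((∑ i ∈ Iic (Fintype.card κ), (Fintype.card ι).choose i : ℕ) : ENNReal) /
        2 ^ Fintype.card ι ≤
      Measure.pi μ {W | ReluInjectiveAt W zstar} := by
  classical
  have ae_card_le : ∀ᵐ W ∂Measure.pi μ,
      #{A : Finset ι | A.piecewise W (-W) ∉ {W | ReluInjectiveAt W zstar}} ≤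
        ∑ i ∈ Iic (Fintype.card κ), (Fintype.card ι).choose i :=
    (ae_linearGeneralPosition μ hμ).mono fun W hW => by
      simpa [collisionPatterns] using card_collisionPatterns_le hW zstar
  simpa using one_sub_div_card_le_measure_of_ae_card_le (measurePreserving_piecewise_neg μ)
    ae_card_le

theorem random_relu_layer_injective_at_point_general
    (hμ : ∀ i, ∀ p : Submodule ℝ (κ → ℝ), p ≠ ⊤ → μ i p = 0)
    (hcard : 2 * Fintype.card κ ≤ Fintype.card ι) (zstar : κ → ℝ) :
    1 - ENNReal.ofReal (Real.exp (-2 * ((Fintype.card ι : ℝ) / 2 - (Fintype.card κ : ℝ)) ^ 2 /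
        (Fintype.card ι : ℝ))) ≤
      Measure.pi μ
        {W | ∀ z : κ → ℝ,
          (∀ i, relu ((Matrix.of W).mulVec z i) = relu ((Matrix.of W).mulVec zstar i)) →
            z = zstar} := by
  refine (tsub_le_tsub_left ?_ 1).trans
    (one_sub_sum_choose_div_le_measure_reluInjectiveAt μ hμ zstar)
  refine ENNReal.div_le_of_le_mul' ?_
  rw [← ENNReal.ofReal_natCast, ← ENNReal.ofReal_ofNat, ← ENNReal.ofReal_pow zero_le_two,
    ← ENNReal.ofReal_mul (by positivity), Nat.cast_sum]
  exact ENNReal.ofReal_le_ofReal (sum_Iic_choose_le_two_pow_mul_exp hcard)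

end RandomLayer

instance isNegInvariant_gaussianReal_zero (v : NNReal) : (gaussianReal 0 v).IsNegInvariant :=
  ⟨gaussianReal_map_neg.trans (by rw [neg_zero])⟩

theorem measure_pi_stdGaussian_submodule_eq_zero {κ : Type*} [Fintype κ]
    (p : Submodule ℝ (κ → ℝ)) (hp : p ≠ ⊤) : (Measure.pi fun _ : κ => gaussianReal 0 1) p = 0 :=
  have := nullSingletonClass_gaussianReal (μ := 0) one_ne_zero
  measure_pi_submodule_eq_zero _ hp

/-- **Injectivity of a random expansive ReLU layer at a given point.**
For positive integers `k, n` with `n ≥ (21/10)·k`, a fixed `z* ∈ ℝ^k`, and `W` a random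
`n×k` matrix with i.i.d. standard Gaussian entries, with probability at least
`1 − exp(−2(n/2 − k)²/n)` every `z ∈ ℝ^k` with `ReLU(Wz) = ReLU(Wz*)` satisfies
`z = z*`. -/
theorem random_relu_layer_injective_at_point
    (n k : ℕ) (hk : 0 < k) (hn : 21 * k ≤ 10 * n) (zstar : Fin k → ℝ) :
    1 - ENNReal.ofReal (Real.exp (-2 * ((n : ℝ) / 2 - (k : ℝ)) ^ 2 / (n : ℝ))) ≤
      stdGaussianMatrix n k
        {W | ∀ z : Fin k → ℝ,
          (∀ i, relu ((Matrix.of W).mulVec z i) = relu ((Matrix.of W).mulVec zstar i)) →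
            z = zstar} := by
  simpa only [stdGaussianMatrix, Fintype.card_fin] using
    random_relu_layer_injective_at_point_general (ι := Fin n) _
      (fun _ => measure_pi_stdGaussian_submodule_eq_zero) (by simp only [Fintype.card_fin]; omega)
      zstar
end

section
/- (Approximate inversion of a single noisy ReLU layer in ℓ∞.) Let W ∈ ℝ^{n×k} with rows w_1,…,w_n, let m > k be an integer and c > 0 a constant, and suppose W (m,c)-extends the ℓ∞ norm. Let z* ∈ ℝ^k, let e ∈ ℝ^n with ‖e‖_∞ ≤ ε, and set x = ReLU(Wz*) + e. Assume that ReLU(Wz*) has at least m coordinates strictly greater than 2ε. Then every z ∈ ℝ^k that is ε-feasible for (W, x) satisfies ‖z − z*‖_∞ ≤ 2ε/c. (In particular, z* itself is ε-feasible, so the feasible set is nonempty.) -/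
/-- `W` `(m,c)`-extends the `ℓ∞` norm: for every index set `I` with `|I| ≥ m` and every
`a ∈ ℝ^k`, `‖W_{I,:}a‖_∞ ≥ c‖a‖_∞` (here `‖a‖` is the sup norm on `Fin k → ℝ`, and the
left-hand sup over rows in `I` is expressed by an existential witness). -/
def ExtendsLinf {n k : ℕ} (W : Matrix (Fin n) (Fin k) ℝ) (m : ℕ) (c : ℝ) : Prop :=
  ∀ I : Finset (Fin n), m ≤ I.card → ∀ a : Fin k → ℝ, ∃ i ∈ I, c * ‖a‖ ≤ |W.mulVec a i|

/-- `z` is `δ`-feasible for `(W, y)`: `|w_j·z − y_j| ≤ δ` for every `j` with `y_j > δ`,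
and `w_j·z ≤ y_j + δ` for every `j` with `y_j ≤ δ`. -/
def InfFeasible {n k : ℕ} (W : Matrix (Fin n) (Fin k) ℝ) (y : Fin n → ℝ) (δ : ℝ)
    (z : Fin k → ℝ) : Prop :=
  ∀ j, (δ < y j → |W.mulVec z j - y j| ≤ δ) ∧ (y j ≤ δ → W.mulVec z j ≤ y j + δ)

/-!
Two feasible vectors for the same observation `y` are both close to `y` on the coordinates where
`y` exceeds the tolerances, hence close to each other there after applying `W`; if there are at
least `m` such coordinates, the extension property turns this into closeness of the vectors
themselves. This applies to `z` and `z*`, since `z*` is feasible and a coordinate of `ReLU(Wz*)`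
above `ε + δ` stays above `δ` under noise of size `ε`.
-/

theorem le_relu (t : ℝ) : t ≤ relu t :=
  le_max_left t 0

theorem relu_eq_self_of_relu_pos {t : ℝ} (ht : 0 < relu t) : relu t = t :=
  max_eq_left ((lt_max_iff.mp ht).resolve_right (lt_irrefl 0)).le

theorem abs_apply_le_of_norm_le {ι : Type*} [Fintype ι] {e : ι → ℝ} {ε : ℝ} (he : ‖e‖ ≤ ε)
    (j : ι) : |e j| ≤ ε :=
  (norm_le_pi_norm e j).trans he

section

variable {n k m : ℕ} {W : Matrix (Fin n) (Fin k) ℝ} {c δ δ' ε : ℝ} {y e : Fin n → ℝ}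
  {z z' : Fin k → ℝ}

theorem ExtendsLinf.norm_le_div (hext : ExtendsLinf W m c) (hc : 0 < c) {I : Finset (Fin n)}
    (hI : m ≤ I.card) {a : Fin k → ℝ} {r : ℝ} (ha : ∀ i ∈ I, |W.mulVec a i| ≤ r) :
    ‖a‖ ≤ r / c := by
  obtain ⟨i, hi, hle⟩ := hext I hI a
  exact (le_div_iff₀' hc).mpr (hle.trans (ha i hi))

theorem InfFeasible.abs_mulVec_sub_le (hz : InfFeasible W y δ z) (hz' : InfFeasible W y δ' z')
    {j : Fin n} (hj : δ < y j) (hj' : δ' < y j) : |W.mulVec (z - z') j| ≤ δ + δ' :=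
  calc |W.mulVec (z - z') j|
      = |W.mulVec z j - W.mulVec z' j| := by rw [Matrix.mulVec_sub, Pi.sub_apply]
    _ ≤ |W.mulVec z j - y j| + |y j - W.mulVec z' j| := abs_sub_le _ _ _
    _ = |W.mulVec z j - y j| + |W.mulVec z' j - y j| := by rw [abs_sub_comm (y j)]
    _ ≤ δ + δ' := add_le_add ((hz j).1 hj) ((hz' j).1 hj')

theorem InfFeasible.norm_sub_le_div (hz : InfFeasible W y δ z) (hz' : InfFeasible W y δ' z')
    (hext : ExtendsLinf W m c) (hc : 0 < c) {I : Finset (Fin n)} (hI : m ≤ I.card)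
    (hy : ∀ j ∈ I, δ < y j ∧ δ' < y j) : ‖z - z'‖ ≤ (δ + δ') / c :=
  hext.norm_le_div hc hI fun j hj => hz.abs_mulVec_sub_le hz' (hy j hj).1 (hy j hj).2

theorem infFeasible_relu_mulVec_add (W : Matrix (Fin n) (Fin k) ℝ) (z : Fin k → ℝ)
    (he : ‖e‖ ≤ ε) : InfFeasible W (fun j => relu (W.mulVec z j) + e j) ε z := by
  intro j
  have hej : |e j| ≤ ε := abs_apply_le_of_norm_le he j
  beta_reduce
  refine ⟨fun hj => ?_, fun _ => ?_⟩
  · have hpos : 0 < relu (W.mulVec z j) := by linarith [le_of_abs_le hej]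
    rwa [relu_eq_self_of_relu_pos hpos, sub_add_cancel_left, abs_neg]
  · linarith [le_relu (W.mulVec z j), neg_le_of_abs_le hej]

end

theorem single_layer_noisy_relu_linf_inversion_general {n k m : ℕ}
    {W : Matrix (Fin n) (Fin k) ℝ} {c δ ε : ℝ} (hc : 0 < c) (hext : ExtendsLinf W m c)
    (zstar : Fin k → ℝ) {e : Fin n → ℝ} (he : ‖e‖ ≤ ε) (hεδ : ε ≤ δ)
    (hbig : m ≤ (Finset.univ.filter fun j => ε + δ < relu (W.mulVec zstar j)).card) :
    InfFeasible W (fun j => relu (W.mulVec zstar j) + e j) δ zstar ∧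
      ∀ z : Fin k → ℝ, InfFeasible W (fun j => relu (W.mulVec zstar j) + e j) δ z →
        ‖z - zstar‖ ≤ (ε + δ) / c := by
  refine ⟨infFeasible_relu_mulVec_add W zstar (he.trans hεδ), fun z hz => ?_⟩
  rw [add_comm ε δ]
  refine hz.norm_sub_le_div (infFeasible_relu_mulVec_add W zstar he) hext hc hbig fun j hj => ?_
  have hlarge : ε + δ < relu (W.mulVec zstar j) := (Finset.mem_filter.mp hj).2
  have hnoise : -ε ≤ e j := neg_le_of_abs_le (abs_apply_le_of_norm_le he j)
  have hobs : δ < relu (W.mulVec zstar j) + e j := by linarith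
  exact ⟨hobs, hεδ.trans_lt hobs⟩

/-- **Approximate inversion of a single noisy ReLU layer in `ℓ∞`.**
Suppose `W` `(m,c)`-extends the `ℓ∞` norm with `m > k`, `x = ReLU(Wz*) + e` with
`‖e‖_∞ ≤ ε`, and `ReLU(Wz*)` has at least `m` coordinates strictly greater than `2ε`.
Then `z*` is `ε`-feasible for `(W,x)`, and every `ε`-feasible `z` satisfies
`‖z − z*‖_∞ ≤ 2ε/c`. -/
theorem single_layer_noisy_relu_linf_inversion
    (n k m : ℕ) (W : Matrix (Fin n) (Fin k) ℝ) (c ε : ℝ)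
    (hc : 0 < c) (hm : k < m) (hext : ExtendsLinf W m c)
    (zstar : Fin k → ℝ) (e : Fin n → ℝ) (he : ‖e‖ ≤ ε)
    (x : Fin n → ℝ) (hx : x = fun j => relu (W.mulVec zstar j) + e j)
    (hbig : m ≤ (Finset.univ.filter fun j => 2 * ε < relu (W.mulVec zstar j)).card) :
    InfFeasible W x ε zstar ∧
      ∀ z : Fin k → ℝ, InfFeasible W x ε z → ‖z - zstar‖ ≤ 2 * ε / c := by
  subst hx
  simp only [two_mul] at hbig ⊢
  exact single_layer_noisy_relu_linf_inversion_general hc hext zstar he le_rfl hbig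
end

section
/- (Random Gaussian matrices satisfy the ℓ∞ extension property.) There exist absolute constants c₂ ∈ (0,2], c > 0 and C > 0 with the following property. Let k, N be positive integers with N ≥ 2k, and let A be a random N×k matrix with i.i.d. standard Gaussian entries. Then with probability at least 1 − C·exp(−c·k), for every x ∈ ℝ^k one has ‖Ax‖_∞ ≥ c₂·‖x‖_∞. In particular, for W a random n×k matrix with i.i.d. standard Gaussian entries and n ≥ 5k, each fixed row-subset I ⊆ {1,…,n} with |I| ≥ 2k satisfies ‖W_{I,:}x‖_∞ ≥ c₂‖x‖_∞ for all x with probability at least 1 − C·exp(−c·k). -/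
open MeasureTheory ProbabilityTheory

/-!
Normalising `x` at a coordinate `j` where `|x j| = ‖x‖`, the inequality `‖A x‖ < ε ‖x‖` says that
column `j` of `A` lies within sup-distance `ε`, hence within Euclidean distance `ε √n`, of the span
of the other `k - 1` columns. Conditionally on those columns, the distance is the norm of a standard
Gaussian vector in dimension at least `n - (k - 1)`, so Chernoff's bound for its square gives
probability at most `exp (n / 2) * ε ^ (n - (k - 1))`. A union bound over `j` costs a factor `k`,
and for `n ≥ 2 k` and `ε = exp (-3)` what remains is at most `k * exp (-2 k) ≤ exp (-k)`.
-/

open Module WithLp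

section SmallBall

lemma norm_orthogonalProjectionOnto_orthogonal_le_infDist {𝕜 E : Type*} [RCLike 𝕜]
    [NormedAddCommGroup E] [InnerProductSpace 𝕜 E] (K : Submodule 𝕜 E)
    [Kᗮ.HasOrthogonalProjection] (y : E) :
    ‖Kᗮ.orthogonalProjectionOnto y‖ ≤ Metric.infDist y K := by
  refine (Metric.le_infDist K.nonempty).2 fun h hh ↦ ?_
  have projection_eq : Kᗮ.orthogonalProjectionOnto y = Kᗮ.orthogonalProjectionOnto (y - h) := by
    rw [map_sub, Submodule.orthogonalProjectionOnto_eq_zero_iff.2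
      (K.le_orthogonal_orthogonal hh), sub_zero]
  rw [projection_eq, dist_eq_norm]
  exact Kᗮ.norm_orthogonalProjectionOnto_apply_le _

-- For `1 / 2 ≤ t` the integral diverges and both sides are zero by convention.
lemma mgf_sq_gaussianReal (t : ℝ) :
    mgf (fun x ↦ x ^ 2) (gaussianReal 0 1) t = (√(1 - 2 * t))⁻¹ := by
  have density_mul (x : ℝ) : gaussianPDFReal 0 1 x • Real.exp (t * x ^ 2) =
      (√(2 * Real.pi))⁻¹ * Real.exp (-(1 / 2 - t) * x ^ 2) := by
    simp only [gaussianPDFReal, smul_eq_mul, NNReal.coe_one, mul_one, sub_zero]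
    rw [mul_assoc, ← Real.exp_add]
    ring_nf
  have constants : (2 * Real.pi)⁻¹ * (Real.pi / (1 / 2 - t)) = (1 - 2 * t)⁻¹ := by
    rw [show 1 - 2 * t = 2 * (1 / 2 - t) by ring]
    field_simp
  rw [mgf, integral_gaussianReal_eq_integral_smul one_ne_zero]
  simp_rw [density_mul]
  rw [integral_const_mul, integral_gaussian, ← Real.sqrt_inv, ← Real.sqrt_mul (by positivity),
    constants, Real.sqrt_inv]

variable {E : Type*} [NormedAddCommGroup E] [InnerProductSpace ℝ E] [FiniteDimensional ℝ E]
  [MeasurableSpace E] [BorelSpace E]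

lemma mgf_norm_sq_stdGaussian (t : ℝ) :
    mgf (fun x ↦ ‖x‖ ^ 2) (stdGaussian E) t = (√(1 - 2 * t))⁻¹ ^ finrank ℝ E := by
  have exp_norm_sq (g : Fin (finrank ℝ E) → ℝ) :
      Real.exp (t * ‖∑ i, g i • stdOrthonormalBasis ℝ E i‖ ^ 2) =
        ∏ i, Real.exp (t * g i ^ 2) := by
    rw [← (stdOrthonormalBasis ℝ E).sum_sq_inner_right, Finset.mul_sum, Real.exp_sum]
    simp only [(stdOrthonormalBasis ℝ E).orthonormal.inner_right_fintype]
  rw [mgf, stdGaussian, integral_map (Measurable.aemeasurable (by fun_prop)) (by fun_prop)]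
  simp_rw [exp_norm_sq]
  rw [integral_fintype_prod_eq_prod (fun _ x ↦ Real.exp (t * x ^ 2))]
  simp_rw [← mgf_sq_gaussianReal t]
  simp [mgf]

lemma stdGaussian_real_closedBall_le {ε : ℝ} (hε : 0 < ε) (r : ℝ) :
    (stdGaussian E).real (Metric.closedBall 0 r) ≤
      Real.exp ((r / ε) ^ 2 / 2) * ε ^ finrank ℝ E := by
  -- The Chernoff parameter `-1 / (2 ε ^ 2)` makes the base `(1 + 1 / ε ^ 2) ^ (-1 / 2) ≤ ε`.
  set t : ℝ := -(1 / (2 * ε ^ 2)) with ht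
  have t_nonpos : t ≤ 0 := neg_nonpos.2 (by positivity)
  have integrable_exp : Integrable (fun x ↦ Real.exp (t * ‖x‖ ^ 2)) (stdGaussian E) := by
    refine Integrable.of_bound (C := 1) (by fun_prop) (ae_of_all _ fun x ↦ ?_)
    rw [Real.norm_eq_abs, Real.abs_exp, Real.exp_le_one_iff]
    exact mul_nonpos_of_nonpos_of_nonneg t_nonpos (by positivity)
  have base_le : (√(1 - 2 * t))⁻¹ ≤ ε := by
    refine inv_le_of_inv_le₀ hε (Real.le_sqrt_of_sq_le ?_)
    rw [show 1 - 2 * t = 1 + ε⁻¹ ^ 2 by rw [ht]; field_simp; ring]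
    linarith
  calc (stdGaussian E).real (Metric.closedBall 0 r)
      ≤ (stdGaussian E).real {x | ‖x‖ ^ 2 ≤ r ^ 2} := measureReal_mono fun x hx ↦
        Set.mem_ofPred.2 (pow_le_pow_left₀ (norm_nonneg x) (mem_closedBall_zero_iff.1 hx) 2)
    _ ≤ Real.exp (-t * r ^ 2) * mgf (fun x ↦ ‖x‖ ^ 2) (stdGaussian E) t :=
        measure_le_le_exp_mul_mgf _ t_nonpos integrable_exp
    _ = Real.exp ((r / ε) ^ 2 / 2) * (√(1 - 2 * t))⁻¹ ^ finrank ℝ E := by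
        rw [mgf_norm_sq_stdGaussian, ht]
        congr 2
        field_simp
    _ ≤ Real.exp ((r / ε) ^ 2 / 2) * ε ^ finrank ℝ E := by gcongr

lemma map_orthogonalProjectionOnto_stdGaussian (K : Submodule ℝ E) :
    (stdGaussian E).map K.orthogonalProjectionOnto = stdGaussian K := by
  refine Measure.ext_of_charFun (funext fun t ↦ ?_)
  have charFun_map : charFun ((stdGaussian E).map K.orthogonalProjectionOnto) t =
      charFun (stdGaussian E) (t : E) := by
    simp only [charFun_apply]
    rw [integral_map (by fun_prop) (by fun_prop)]
    simp
  rw [charFun_map, charFun_stdGaussian, charFun_stdGaussian, Submodule.coe_norm]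

lemma stdGaussian_real_infDist_le_le {ε : ℝ} (hε : 0 < ε) (K : Submodule ℝ E) (r : ℝ) :
    (stdGaussian E).real {y | Metric.infDist y K ≤ r} ≤
      Real.exp ((r / ε) ^ 2 / 2) * ε ^ finrank ℝ Kᗮ := by
  calc (stdGaussian E).real {y | Metric.infDist y K ≤ r}
      ≤ (stdGaussian E).real (Kᗮ.orthogonalProjectionOnto ⁻¹' Metric.closedBall 0 r) :=
        measureReal_mono fun y hy ↦ mem_closedBall_zero_iff.2 <|
          (norm_orthogonalProjectionOnto_orthogonal_le_infDist K y).trans hy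
    _ = (stdGaussian Kᗮ).real (Metric.closedBall 0 r) := by
        rw [← map_orthogonalProjectionOnto_stdGaussian,
          map_measureReal_apply (by fun_prop) measurableSet_closedBall]
    _ ≤ _ := stdGaussian_real_closedBall_le hε r

end SmallBall

section Column

variable {ι κ : Type*} [Fintype ι] [Fintype κ]

lemma norm_toLp_two_le_sqrt_card_mul_norm {β : ι → Type*} [∀ i, SeminormedAddCommGroup (β i)]
    (v : ∀ i, β i) : ‖toLp 2 v‖ ≤ √(Fintype.card ι) * ‖v‖ := by
  simpa [Real.sqrt_eq_rpow] using (PiLp.lipschitzWith_toLp 2 β).dist_le_mul v 0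

lemma card_sub_card_le_finrank_orthogonal_range_toEuclideanLin [DecidableEq κ]
    (M : Matrix ι κ ℝ) :
    Fintype.card ι - Fintype.card κ ≤ finrank ℝ (M.toEuclideanLin.range)ᗮ := by
  have finrank_range : finrank ℝ M.toEuclideanLin.range ≤ Fintype.card κ := by
    simpa using M.toEuclideanLin.finrank_range_le
  have finrank_add := M.toEuclideanLin.range.finrank_add_finrank_orthogonal
  rw [finrank_euclideanSpace] at finrank_add
  omega

lemma pi_gaussianReal_exists_norm_add_mulVec_lt_le {ε : ℝ} (hε : 0 < ε) (hε_le : ε ≤ 1)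
    (M : Matrix ι κ ℝ) :
    (Measure.pi fun _ : ι ↦ gaussianReal 0 1) {a | ∃ z, ‖a + M.mulVec z‖ < ε} ≤
      ENNReal.ofReal
        (Real.exp (Fintype.card ι / 2) * ε ^ (Fintype.card ι - Fintype.card κ)) := by
  classical
  set K := M.toEuclideanLin.range
  set r := √(Fintype.card ι) * ε
  have near_span : {a | ∃ z, ‖a + M.mulVec z‖ < ε} ⊆
      toLp 2 ⁻¹' {y | Metric.infDist y K ≤ r} := by
    rintro a ⟨z, hz⟩
    have neg_mem : toLp 2 (-M.mulVec z) ∈ K := ⟨toLp 2 (-z), by simp⟩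
    calc Metric.infDist (toLp 2 a) K
        ≤ dist (toLp 2 a) (toLp 2 (-M.mulVec z)) := Metric.infDist_le_dist_of_mem neg_mem
      _ = ‖toLp 2 (a + M.mulVec z)‖ := by rw [dist_eq_norm, ← toLp_sub, sub_neg_eq_add]
      _ ≤ √(Fintype.card ι) * ‖a + M.mulVec z‖ := norm_toLp_two_le_sqrt_card_mul_norm _
      _ ≤ r := mul_le_mul_of_nonneg_left hz.le (Real.sqrt_nonneg _)
  have measurableSet_near : MeasurableSet {y : EuclideanSpace ℝ ι | Metric.infDist y K ≤ r} :=
    measurableSet_le (by fun_prop) measurable_const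
  have exponent : (r / ε) ^ 2 / 2 = Fintype.card ι / 2 := by
    rw [mul_div_cancel_right₀ _ hε.ne', Real.sq_sqrt (Nat.cast_nonneg _)]
  refine (measure_mono near_span).trans ?_
  rw [← Measure.map_apply (by fun_prop) measurableSet_near, map_pi_eq_stdGaussian,
    ← ofReal_measureReal, ← exponent]
  refine ENNReal.ofReal_le_ofReal ((stdGaussian_real_infDist_le_le hε K r).trans ?_)
  gcongr ?_ * ?_
  exact pow_le_pow_of_le_one hε.le hε_le
    (card_sub_card_le_finrank_orthogonal_range_toEuclideanLin M)

end Column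

section Product

variable {ι : Type*} [Fintype ι]

lemma pi_pi_le_of_forall_column_le {α : Type*} [MeasurableSpace α] {k : ℕ}
    (μ : Fin (k + 1) → Measure α) [∀ l, IsProbabilityMeasure (μ l)] (j : Fin (k + 1))
    {S : Set (ι → Fin (k + 1) → α)} (hS : MeasurableSet S) {c : ENNReal}
    (h : ∀ M : ι → Fin k → α,
      (Measure.pi fun _ : ι ↦ μ j) {a | (fun i ↦ j.insertNth (a i) (M i)) ∈ S} ≤ c) :
    (Measure.pi fun _ : ι ↦ Measure.pi μ) S ≤ c := by
  set e : (ι → Fin (k + 1) → α) ≃ᵐ (ι → α) × (ι → Fin k → α) :=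
    (MeasurableEquiv.piCongrRight fun _ ↦ MeasurableEquiv.piFinSuccAbove (fun _ ↦ α) j).trans
      (MeasurableEquiv.arrowProdEquivProdArrow α (Fin k → α) ι)
  have he : MeasurePreserving e (Measure.pi fun _ : ι ↦ Measure.pi μ)
      ((Measure.pi fun _ ↦ μ j).prod
        (Measure.pi fun _ ↦ Measure.pi fun l ↦ μ (j.succAbove l))) :=
    (measurePreserving_arrowProdEquivProdArrow α (Fin k → α) ι _ _).comp
      (measurePreserving_pi _ _ fun _ ↦ measurePreserving_piFinSuccAbove μ j)
  rw [← he.symm.measure_preimage_equiv, Measure.prod_apply_symm (e.symm.measurable hS)]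
  calc ∫⁻ M, (Measure.pi fun _ : ι ↦ μ j) ((fun a ↦ (a, M)) ⁻¹' (e.symm ⁻¹' S)) ∂_
      ≤ ∫⁻ _, c ∂_ := lintegral_mono h
    _ = c := by simp

lemma measurePreserving_restrict_pi {α : ι → Type*} [∀ i, MeasurableSpace (α i)]
    (μ : ∀ i, Measure (α i)) [∀ i, IsProbabilityMeasure (μ i)] (I : Finset ι) :
    MeasurePreserving I.restrict (Measure.pi μ) (Measure.pi fun i : I ↦ μ i) := by
  classical
  convert measurePreserving_fst.comp (measurePreserving_piEquivPiSubtypeProd μ (· ∈ I))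
  rfl

end Product

section Deterministic

variable {ι κ : Type*} [Fintype ι] [Fintype κ]

lemma exists_norm_apply_eq_pi_norm [Nonempty ι] {β : ι → Type*}
    [∀ i, SeminormedAddCommGroup (β i)] (x : ∀ i, β i) : ∃ i, ‖x i‖ = ‖x‖ := by
  obtain ⟨i, hi⟩ := Finite.exists_max fun i ↦ ‖x i‖
  exact ⟨i, (norm_le_pi_norm x i).antisymm <| (pi_norm_le_iff_of_nonneg (norm_nonneg _)).2 hi⟩

lemma exists_apply_eq_one_norm_mulVec_lt {𝕜 : Type*} [NormedField 𝕜] {A : Matrix ι κ 𝕜}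
    {x : κ → 𝕜} {ε : ℝ} (hx : ‖A.mulVec x‖ < ε * ‖x‖) :
    ∃ j, ∃ y : κ → 𝕜, y j = 1 ∧ ‖A.mulVec y‖ < ε := by
  have x_ne : x ≠ 0 := by
    rintro rfl
    simp at hx
  obtain ⟨l, -⟩ := Function.ne_iff.1 x_ne
  have : Nonempty κ := ⟨l⟩
  obtain ⟨j, hj⟩ := exists_norm_apply_eq_pi_norm x
  have norm_pos : 0 < ‖x j‖ := hj ▸ norm_pos_iff.2 x_ne
  refine ⟨j, (x j)⁻¹ • x, inv_mul_cancel₀ (norm_pos_iff.1 norm_pos), ?_⟩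
  rwa [Matrix.mulVec_smul, norm_smul, norm_inv, inv_mul_lt_iff₀ norm_pos, mul_comm, hj]

lemma isOpen_setOf_exists_mem_norm_mulVec_lt (s : Set (κ → ℝ)) (r : (κ → ℝ) → ℝ) :
    IsOpen {A : ι → κ → ℝ | ∃ x ∈ s, ‖(Matrix.of A).mulVec x‖ < r x} := by
  have eq_iUnion : {A : ι → κ → ℝ | ∃ x ∈ s, ‖(Matrix.of A).mulVec x‖ < r x} =
      ⋃ x ∈ s, {A | ‖(Matrix.of A).mulVec x‖ < r x} := by
    ext A
    simp
  rw [eq_iUnion]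
  exact isOpen_biUnion fun x _ ↦
    isOpen_lt (continuous_id.matrix_mulVec continuous_const).norm continuous_const

lemma isClosed_setOf_forall_le_norm_mulVec (r : (κ → ℝ) → ℝ) :
    IsClosed {A : ι → κ → ℝ | ∀ x, r x ≤ ‖(Matrix.of A).mulVec x‖} := by
  rw [Set.ofPred_forall]
  exact isClosed_iInter fun x ↦
    isClosed_le continuous_const (continuous_id.matrix_mulVec continuous_const).norm

end Deterministic

section GaussianMatrix

/-- The law of a random matrix with i.i.d. standard Gaussian entries whose rows are indexed by an
arbitrary finite type, so that it applies to row submatrices; `stdGaussianMatrix n k` is the case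
`ι = Fin n`. -/
noncomputable abbrev stdGaussianRows (ι : Type*) [Fintype ι] (k : ℕ) : Measure (ι → Fin k → ℝ) :=
  Measure.pi fun _ : ι ↦ Measure.pi fun _ : Fin k ↦ gaussianReal 0 1

variable {ι : Type*} [Fintype ι] {k : ℕ}

lemma stdGaussianRows_exists_apply_eq_one_norm_mulVec_lt_le {ε : ℝ} (hε : 0 < ε) (hε_le : ε ≤ 1)
    (j : Fin (k + 1)) :
    stdGaussianRows ι (k + 1) {A | ∃ x, x j = 1 ∧ ‖(Matrix.of A).mulVec x‖ < ε} ≤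
      ENNReal.ofReal (Real.exp (Fintype.card ι / 2) * ε ^ (Fintype.card ι - k)) := by
  refine pi_pi_le_of_forall_column_le _ j
    (isOpen_setOf_exists_mem_norm_mulVec_lt {x | x j = 1} fun _ ↦ ε).measurableSet fun M ↦ ?_
  have column_bound := pi_gaussianReal_exists_norm_add_mulVec_lt_le hε hε_le (Matrix.of M)
  rw [Fintype.card_fin] at column_bound
  refine (measure_mono ?_).trans column_bound
  rintro a ⟨x, hxj, hx⟩
  have mulVec_eq : (Matrix.of fun i ↦ j.insertNth (α := fun _ ↦ ℝ) (a i) (M i)).mulVec x =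
      a + (Matrix.of M).mulVec fun l ↦ x (j.succAbove l) := by
    ext i
    simp [Matrix.mulVec, dotProduct, Fin.sum_univ_succAbove _ j, show x j = 1 from hxj]
  exact ⟨_, mulVec_eq ▸ hx⟩

lemma stdGaussianRows_exists_norm_mulVec_lt_le {ε : ℝ} (hε : 0 < ε) (hε_le : ε ≤ 1) :
    stdGaussianRows ι k {A | ∃ x, ‖(Matrix.of A).mulVec x‖ < ε * ‖x‖} ≤
      ENNReal.ofReal (k * (Real.exp (Fintype.card ι / 2) * ε ^ (Fintype.card ι - (k - 1)))) := by
  have subset_iUnion : {A : ι → Fin k → ℝ | ∃ x, ‖(Matrix.of A).mulVec x‖ < ε * ‖x‖} ⊆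
      ⋃ j, {A | ∃ x, x j = 1 ∧ ‖(Matrix.of A).mulVec x‖ < ε} := fun A ⟨_, hx⟩ ↦
    Set.mem_iUnion.2 (exists_apply_eq_one_norm_mulVec_lt hx)
  rcases k with _ | k
  · simpa using measure_mono (μ := stdGaussianRows ι 0) subset_iUnion
  calc _ ≤ ∑ j : Fin (k + 1), stdGaussianRows ι (k + 1)
          {A | ∃ x, x j = 1 ∧ ‖(Matrix.of A).mulVec x‖ < ε} :=
        (measure_mono subset_iUnion).trans (measure_iUnion_fintype_le _ _)
    _ ≤ ∑ _ : Fin (k + 1), ENNReal.ofReal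
          (Real.exp (Fintype.card ι / 2) * ε ^ (Fintype.card ι - k)) := by
        gcongr with j
        exact stdGaussianRows_exists_apply_eq_one_norm_mulVec_lt_le hε hε_le j
    _ = _ := by
        rw [Finset.sum_const, Finset.card_univ, Fintype.card_fin, ← ENNReal.ofReal_nsmul,
          nsmul_eq_mul, Nat.add_sub_cancel]

lemma natCast_mul_exp_mul_exp_pow_le_exp_neg {n k : ℕ} (h : 2 * k ≤ n) :
    k * (Real.exp (n / 2) * Real.exp (-3) ^ (n - (k - 1))) ≤ Real.exp (-k) := by
  have cast_le : (n : ℝ) - k ≤ (n - (k - 1) : ℕ) := by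
    rw [sub_le_iff_le_add]
    exact_mod_cast (by omega : n ≤ n - (k - 1) + k)
  have two_mul_le : 2 * (k : ℝ) ≤ n := by exact_mod_cast h
  calc k * (Real.exp (n / 2) * Real.exp (-3) ^ (n - (k - 1)))
      = k * Real.exp (n / 2 - 3 * (n - (k - 1) : ℕ)) := by
        rw [← Real.exp_nat_mul, ← Real.exp_add]
        ring_nf
    _ ≤ Real.exp k * Real.exp (-2 * k) := by
        gcongr
        · linarith [Real.add_one_le_exp (k : ℝ)]
        · linarith
    _ = Real.exp (-k) := by
        rw [← Real.exp_add]
        ring_nf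

lemma one_sub_exp_neg_le_stdGaussianRows_forall_le_norm_mulVec (h : 2 * k ≤ Fintype.card ι) :
    1 - ENNReal.ofReal (Real.exp (-k)) ≤
      stdGaussianRows ι k {A | ∀ x, Real.exp (-3) * ‖x‖ ≤ ‖(Matrix.of A).mulVec x‖} := by
  set bad : Set (ι → Fin k → ℝ) := {A | ∃ x, ‖(Matrix.of A).mulVec x‖ < Real.exp (-3) * ‖x‖}
  have bad_le : stdGaussianRows ι k bad ≤ ENNReal.ofReal (Real.exp (-k)) :=
    (stdGaussianRows_exists_norm_mulVec_lt_le (Real.exp_pos _) (by simp)).trans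
      (ENNReal.ofReal_le_ofReal (natCast_mul_exp_mul_exp_pow_le_exp_neg h))
  have compl_bad : badᶜ = {A | ∀ x, Real.exp (-3) * ‖x‖ ≤ ‖(Matrix.of A).mulVec x‖} := by
    ext A
    simp [bad]
  calc 1 - ENNReal.ofReal (Real.exp (-k)) ≤ 1 - stdGaussianRows ι k bad := by gcongr
    _ ≤ stdGaussianRows ι k badᶜ :=
        tsub_le_iff_left.2 (by simpa using measure_univ_le_add_compl (μ := stdGaussianRows ι k) bad)
    _ = _ := by rw [compl_bad]

theorem random_gaussian_linf_extension_general (I : Finset ι) (hI : 2 * k ≤ I.card) :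
    1 - ENNReal.ofReal (Real.exp (-k)) ≤ stdGaussianRows ι k
      {W | ∀ x, ∃ i ∈ I, Real.exp (-3) * ‖x‖ ≤ |(Matrix.of W).mulVec x i|} := by
  rcases I.eq_empty_or_nonempty with rfl | I_nonempty
  · obtain rfl : k = 0 := by simpa using hI
    simp
  have : Nonempty I := I_nonempty.to_subtype
  calc 1 - ENNReal.ofReal (Real.exp (-k))
      ≤ stdGaussianRows I k {A | ∀ x, Real.exp (-3) * ‖x‖ ≤ ‖(Matrix.of A).mulVec x‖} :=
        one_sub_exp_neg_le_stdGaussianRows_forall_le_norm_mulVec (by simpa)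
    _ = stdGaussianRows ι k (I.restrict ⁻¹'
          {A | ∀ x, Real.exp (-3) * ‖x‖ ≤ ‖(Matrix.of A).mulVec x‖}) :=
        .symm <| (measurePreserving_restrict_pi _ I).measure_preimage (μa := stdGaussianRows ι k)
          (isClosed_setOf_forall_le_norm_mulVec _).measurableSet.nullMeasurableSet
    _ ≤ stdGaussianRows ι k
          {W | ∀ x, ∃ i ∈ I, Real.exp (-3) * ‖x‖ ≤ |(Matrix.of W).mulVec x i|} := by
        refine measure_mono fun W hW x ↦ ?_
        obtain ⟨i, hi⟩ := exists_norm_apply_eq_pi_norm ((Matrix.of (I.restrict W)).mulVec x)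
        exact ⟨i, i.2, (hW x).trans_eq hi.symm⟩

end GaussianMatrix

/-- **Random Gaussian matrices satisfy the `ℓ∞` extension property.**
There are absolute constants `c₂ ∈ (0,2]`, `c > 0`, `C > 0` such that:
(1) for positive integers `k, N` with `N ≥ 2k` and `A` a random `N×k` matrix with
i.i.d. standard Gaussian entries, with probability at least `1 − C·exp(−c·k)` one has
`‖Ax‖_∞ ≥ c₂‖x‖_∞` for every `x ∈ ℝ^k`; and
(2) for `W` a random `n×k` Gaussian matrix with `n ≥ 5k` and any fixed row set `I` with
`|I| ≥ 2k`, with probability at least `1 − C·exp(−c·k)` one has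
`‖W_{I,:}x‖_∞ ≥ c₂‖x‖_∞` for all `x` (the sup over rows in `I` being expressed by an
existential witness). -/
theorem random_gaussian_linf_extension :
    ∃ c₂ c C : ℝ, 0 < c₂ ∧ c₂ ≤ 2 ∧ 0 < c ∧ 0 < C ∧
      (∀ k N : ℕ, 0 < k → 2 * k ≤ N →
        1 - ENNReal.ofReal (C * Real.exp (-c * (k : ℝ))) ≤
          stdGaussianMatrix N k
            {A | ∀ x : Fin k → ℝ, c₂ * ‖x‖ ≤ ‖(Matrix.of A).mulVec x‖}) ∧
      (∀ n k : ℕ, 0 < k → 5 * k ≤ n → ∀ I : Finset (Fin n), 2 * k ≤ I.card →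
        1 - ENNReal.ofReal (C * Real.exp (-c * (k : ℝ))) ≤
          stdGaussianMatrix n k
            {W | ∀ x : Fin k → ℝ, ∃ i ∈ I, c₂ * ‖x‖ ≤ |(Matrix.of W).mulVec x i|}) := by
  refine ⟨Real.exp (-3), 1, 1, Real.exp_pos _,
    (Real.exp_le_one_iff.2 (by norm_num)).trans one_le_two, one_pos, one_pos,
    fun k N _ hN ↦ ?_, fun n k _ _ I hI ↦ ?_⟩ <;> rw [one_mul, neg_one_mul]
  · refine (random_gaussian_linf_extension_general Finset.univ (by simpa)).trans <|
      measure_mono fun A hA x ↦ ?_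
    obtain ⟨i, -, hi⟩ := hA x
    exact hi.trans (norm_le_pi_norm ((Matrix.of A).mulVec x) i)
  · exact random_gaussian_linf_extension_general I hI
end

section
/- (Corollary: ℓ∞ recovery for random Gaussian networks.) There exist absolute constants c₂ ∈ (0,2], c > 0 and C > 0 with the following property. Let d ≥ 1, n₀ = k, and n_i ≥ 5·n_{i−1} for i = 1,…,d; let W₁,…,W_d be independent random matrices where W_i ∈ ℝ^{n_i × n_{i−1}} has i.i.d. standard Gaussian entries, and let G(z) = ReLU(W_d ⋯ ReLU(W₁ z) ⋯ ). Fix z* ∈ ℝ^k, let e satisfy ‖e‖_∞ = ε with ε < (c₂^d / 2^{d+4})·‖z*‖₂·√k, and set x = G(z*) + e. Define z₀* = z*, z_i* = ReLU(W_i z_{i−1}*) and ε_i = (2/c₂)^{d−i}·ε. Then with probability at least 1 − C·exp(−c·k) over the weights, every chain ẑ_d = x, ẑ_{d−1}, …, ẑ₀ in which each ẑ_{i−1} is ε_i-feasible for (W_i, ẑ_i) satisfies ‖ẑ₀ − z*‖_∞ ≤ (2/c₂)^d · ε, and at least one such chain exists. -/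
open MeasureTheory ProbabilityTheory

/-- The joint law of `d` independent Gaussian weight matrices, where the `i`-th matrix
has shape `n (i+1) × n i`. -/
noncomputable def netGaussian (d : ℕ) (n : ℕ → ℕ) :
    Measure (∀ i : Fin d, Fin (n (i.1 + 1)) → Fin (n i.1) → ℝ) :=
  Measure.pi fun i : Fin d => stdGaussianMatrix (n (i.1 + 1)) (n i.1)

/-- Extend a `Fin d`-indexed family of weight matrices to an `ℕ`-indexed family
(by zero beyond `d`). -/
noncomputable def extendW (d : ℕ) (n : ℕ → ℕ)
    (W' : ∀ i : Fin d, Fin (n (i.1 + 1)) → Fin (n i.1) → ℝ) :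
    ∀ i : ℕ, Fin (n (i + 1)) → Fin (n i) → ℝ :=
  fun i => if h : i < d then W' ⟨i, h⟩ else 0

/-- The output of the first `j` ReLU layers of the network with weights `W` on input `z`. -/
noncomputable def layerOut (n : ℕ → ℕ) (W : ∀ i : ℕ, Fin (n (i + 1)) → Fin (n i) → ℝ) :
    (j : ℕ) → (Fin (n 0) → ℝ) → Fin (n j) → ℝ
  | 0, z => z
  | j + 1, z => fun i => relu ((Matrix.of (W j)).mulVec (layerOut n W j z) i)

/-!
Let a layer have weights `W` with `n ≥ 5 k` rows. Inverting it at `z` amplifies an error `δ` by more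
than `10 ^ 7` only if some `u` with `‖u‖_∞ = r ≥ 10 ^ 7 δ` satisfies a linear constraint for every
row `w` of `W`: `|w·u| ≤ 2δ` whenever `w·z > 2δ` or, if `‖z‖₂` is of order `δ` so that these
constraints are rarely active, `w·u ≤ O(δ)` whenever `w·z ≥ -O(δ)`. Such a `u` can be moved to a
vertex of the polytope cut out by these constraints and `‖u‖_∞ ≤ r`, and a vertex is the solution of
`k` tight equations chosen among `n + k`, with signs. Given the rows occurring in these equations,
every other row is independent of the vertex and compatible with it with probability at most
`0.505`. The union bound over vertices is `C(n + k, k) 2 ^ k 0.505 ^ n ≤ 0.985 ^ k`.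

The input of a layer is independent of its weights, so each layer fails with at most this
probability. Since the layer sizes grow geometrically, the failure probabilities sum to
`O(0.985 ^ (n 0))`, and off this event errors grow by at most `10 ^ 7` per layer going backwards.
-/

open Set Filter Topology WithLp
open scoped NNReal ENNReal Matrix

section GaussianEstimates

lemma gaussianPDFReal_le_inv_sqrt (μ : ℝ) (v : ℝ≥0) (x : ℝ) :
    gaussianPDFReal μ v x ≤ (√v)⁻¹ := by
  have h_exp : Real.exp (-(x - μ) ^ 2 / (2 * v)) ≤ 1 :=
    Real.exp_le_one_iff.2 (div_nonpos_of_nonpos_of_nonneg (by nlinarith) (by positivity))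
  have h_two_pi : (√(2 * Real.pi))⁻¹ ≤ 1 :=
    inv_le_one_of_one_le₀ (Real.one_le_sqrt.2 (by nlinarith [Real.pi_gt_three]))
  calc gaussianPDFReal μ v x
      = (√(2 * Real.pi))⁻¹ * (√v)⁻¹ * Real.exp (-(x - μ) ^ 2 / (2 * v)) := by
        rw [gaussianPDFReal_def, Real.sqrt_mul (by positivity), mul_inv]
    _ ≤ 1 * (√v)⁻¹ * 1 := by gcongr
    _ = (√v)⁻¹ := by ring

lemma gaussianReal_le_inv_sqrt_mul_volume (μ : ℝ) {v : ℝ≥0} (hv : v ≠ 0) (s : Set ℝ) :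
    gaussianReal μ v s ≤ ENNReal.ofReal (√v)⁻¹ * volume s := by
  rw [gaussianReal_apply μ hv, ← setLIntegral_const]
  exact lintegral_mono fun x => ENNReal.ofReal_le_ofReal (gaussianPDFReal_le_inv_sqrt μ v x)

lemma gaussianReal_Icc_le (μ : ℝ) {v : ℝ≥0} (hv : v ≠ 0) (a b : ℝ) :
    gaussianReal μ v (Icc a b) ≤ ENNReal.ofReal ((b - a) / √v) := by
  refine (gaussianReal_le_inv_sqrt_mul_volume μ hv _).trans_eq ?_
  rw [Real.volume_Icc, ← ENNReal.ofReal_mul (by positivity), inv_mul_eq_div]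

lemma gaussianReal_Iio_self_eq_Ioi_self (μ : ℝ) (v : ℝ≥0) :
    gaussianReal μ v (Iio μ) = gaussianReal μ v (Ioi μ) := by
  have h_reflect : (gaussianReal μ v).map (2 * μ - ·) = gaussianReal μ v := by
    rw [gaussianReal_map_const_sub]; ring_nf
  calc gaussianReal μ v (Iio μ)
      = (gaussianReal μ v).map (2 * μ - ·) (Iio μ) := by rw [h_reflect]
    _ = gaussianReal μ v (Ioi μ) := by
        rw [Measure.map_apply (by fun_prop) measurableSet_Iio]
        congr 1 with x
        simp only [mem_preimage, mem_Iio, mem_Ioi]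
        constructor <;> intro h <;> linarith

lemma gaussianReal_Ioi_self_le_half (μ : ℝ) (v : ℝ≥0) :
    gaussianReal μ v (Ioi μ) ≤ ENNReal.ofReal (1 / 2) := by
  have h_twice : 2 * gaussianReal μ v (Ioi μ) ≤ 1 := by
    calc 2 * gaussianReal μ v (Ioi μ)
        = gaussianReal μ v (Iio μ) + gaussianReal μ v (Ioi μ) := by
          rw [gaussianReal_Iio_self_eq_Ioi_self, two_mul]
      _ = gaussianReal μ v (Iio μ ∪ Ioi μ) :=
          (measure_union ((Iio_disjoint_Ici le_rfl).mono_right Ioi_subset_Ici_self)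
            measurableSet_Ioi).symm
      _ ≤ 1 := prob_le_one
  rw [one_div, ENNReal.ofReal_inv_of_pos two_pos, ENNReal.ofReal_ofNat]
  exact (ENNReal.le_inv_iff_mul_le).2 (by rwa [mul_comm])

lemma gaussianReal_Iic_add_le (μ : ℝ) {v : ℝ≥0} (hv : v ≠ 0) {c : ℝ} (hc : 0 ≤ c) :
    gaussianReal μ v (Iic (μ + c)) ≤ ENNReal.ofReal (1 / 2 + c / √v) := by
  calc gaussianReal μ v (Iic (μ + c))
      ≤ gaussianReal μ v (Iio μ ∪ Icc μ (μ + c)) :=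
        measure_mono fun x hx => (lt_or_ge x μ).imp_right fun h => ⟨h, hx⟩
    _ ≤ gaussianReal μ v (Iio μ) + gaussianReal μ v (Icc μ (μ + c)) := measure_union_le _ _
    _ ≤ ENNReal.ofReal (1 / 2) + ENNReal.ofReal (c / √v) := by
        gcongr
        · exact (gaussianReal_Iio_self_eq_Ioi_self μ v).trans_le
            (gaussianReal_Ioi_self_le_half μ v)
        · simpa using gaussianReal_Icc_le μ hv μ (μ + c)
    _ = ENNReal.ofReal (1 / 2 + c / √v) :=
        (ENNReal.ofReal_add (by norm_num) (by positivity)).symm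

lemma gaussianReal_Iio_sub_le (μ : ℝ) (v : ℝ≥0) {c : ℝ} (hc : 0 < c) :
    gaussianReal μ v (Iio (μ - c)) ≤ ENNReal.ofReal (v / c ^ 2) := by
  have h_chebyshev := meas_ge_le_variance_div_sq (memLp_id_gaussianReal (μ := μ) (v := v) 2) hc
  rw [variance_id_gaussianReal] at h_chebyshev
  refine (measure_mono fun x (hx : x < μ - c) => ?_).trans h_chebyshev
  simp only [id_eq, integral_id_gaussianReal, mem_ofPred_eq]
  exact le_abs.2 (Or.inr (by linarith))

end GaussianEstimates

section StdGaussianVec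

variable {κ : Type*} [Fintype κ]

/-- The standard Gaussian measure on `κ → ℝ`, the law of one row of a weight matrix. Mathlib's
`stdGaussian` lives on `EuclideanSpace ℝ κ`, while rows here are plain functions; accordingly
the Euclidean norm of `v : κ → ℝ` is written `‖toLp 2 v‖`, and `‖v‖` is the sup norm. -/
noncomputable abbrev stdGaussianVec (κ : Type*) [Fintype κ] : Measure (κ → ℝ) :=
  Measure.pi fun _ => gaussianReal 0 1

lemma map_dotProduct_stdGaussianVec (v : κ → ℝ) :
    (stdGaussianVec κ).map (· ⬝ᵥ v) = gaussianReal 0 (‖toLp 2 v‖₊ ^ 2) := by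
  have h_inner : (fun w : κ → ℝ => w ⬝ᵥ v) = innerSL ℝ (toLp 2 v) ∘ toLp 2 := by
    ext w
    simp [PiLp.inner_apply, dotProduct]
  rw [h_inner, ← Measure.map_map (by fun_prop) (by fun_prop), map_pi_eq_stdGaussian,
    IsGaussian.map_eq_gaussianReal, integral_strongDual_stdGaussian, variance_dual_stdGaussian,
    innerSL_apply_norm]
  congr 1
  ext
  simp

lemma stdGaussianVec_dotProduct_mem (v : κ → ℝ) {s : Set ℝ} (hs : MeasurableSet s) :
    stdGaussianVec κ {w | w ⬝ᵥ v ∈ s} = gaussianReal 0 (‖toLp 2 v‖₊ ^ 2) s := by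
  rw [← map_dotProduct_stdGaussianVec, Measure.map_apply (by unfold dotProduct; fun_prop) hs]
  rfl

lemma stdGaussianVec_dotProduct_pos_le (v : κ → ℝ) :
    stdGaussianVec κ {w | 0 < w ⬝ᵥ v} ≤ ENNReal.ofReal (1 / 2) :=
  (stdGaussianVec_dotProduct_mem v measurableSet_Ioi).trans_le (gaussianReal_Ioi_self_le_half _ _)

lemma nnnorm_toLp_sq_ne_zero {v : κ → ℝ} (hv : v ≠ 0) : ‖toLp 2 v‖₊ ^ 2 ≠ 0 := by
  simpa using hv

lemma stdGaussianVec_dotProduct_le_le {v : κ → ℝ} (hv : v ≠ 0) {c : ℝ} (hc : 0 ≤ c) :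
    stdGaussianVec κ {w | w ⬝ᵥ v ≤ c} ≤ ENNReal.ofReal (1 / 2 + c / ‖toLp 2 v‖) := by
  refine (stdGaussianVec_dotProduct_mem v measurableSet_Iic).trans_le ?_
  simpa using gaussianReal_Iic_add_le 0 (nnnorm_toLp_sq_ne_zero hv) hc

lemma stdGaussianVec_abs_dotProduct_le_le {v : κ → ℝ} (hv : v ≠ 0) (c : ℝ) :
    stdGaussianVec κ {w | |w ⬝ᵥ v| ≤ c} ≤ ENNReal.ofReal (2 * c / ‖toLp 2 v‖) := by
  have h_Icc := gaussianReal_Icc_le 0 (nnnorm_toLp_sq_ne_zero hv) (-c) c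
  rw [← stdGaussianVec_dotProduct_mem v measurableSet_Icc] at h_Icc
  simpa [abs_le, two_mul] using h_Icc

lemma stdGaussianVec_dotProduct_lt_neg_le {v : κ → ℝ} {c t : ℝ} (hc : 0 ≤ c)
    (hv : ‖toLp 2 v‖ ≤ t * c) :
    stdGaussianVec κ {w | w ⬝ᵥ v < -c} ≤ ENNReal.ofReal (t ^ 2) := by
  rcases hc.eq_or_lt with rfl | hc
  · have hv_zero : v = 0 := by simpa using hv
    simp [hv_zero]
  · refine (stdGaussianVec_dotProduct_mem v measurableSet_Iio).trans_le ?_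
    rw [← zero_sub]
    refine (gaussianReal_Iio_sub_le 0 _ hc).trans (ENNReal.ofReal_le_ofReal ?_)
    push_cast [coe_nnnorm]
    rw [← div_pow]
    gcongr
    exact (div_le_iff₀ hc).2 hv

lemma norm_le_norm_toLp_two (v : κ → ℝ) : ‖v‖ ≤ ‖toLp 2 v‖ :=
  (pi_norm_le_iff_of_nonneg (norm_nonneg _)).2 (PiLp.norm_apply_le (toLp 2 v))

end StdGaussianVec

section Vertices

lemma eq_zero_of_mem_extremePoints_of_tight {E J : Type*} [AddCommGroup E] [Module ℝ E] [Finite J]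
    (f : J → E →ₗ[ℝ] ℝ) (b : J → ℝ) {u v : E}
    (hu : u ∈ {u | ∀ x, f x u ≤ b x}.extremePoints ℝ)
    (hv : ∀ x, f x u = b x → f x v = 0) : v = 0 := by
  have h_perturb : ∀ᶠ t in 𝓝 (0 : ℝ), u + t • v ∈ {u | ∀ x, f x u ≤ b x} := by
    refine eventually_all.2 fun x => ?_
    simp only [map_add, map_smul, smul_eq_mul]
    rcases (hu.1 x).lt_or_eq with h_slack | h_tight
    · have h_cont : Continuous fun t : ℝ => f x u + t * f x v := by fun_prop
      exact (h_cont.tendsto' 0 (f x u) (by simp)).eventually_le_const h_slack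
    · exact Eventually.of_forall fun t => by rw [hv x h_tight, mul_zero, add_zero, h_tight]
  obtain ⟨ε, hε, h_ball⟩ := Metric.eventually_nhds_iff.1 h_perturb
  have h_mem : ∀ t : ℝ, |t| = ε / 2 → u + t • v ∈ {u | ∀ x, f x u ≤ b x} := fun t ht =>
    h_ball (by rw [dist_zero_right, Real.norm_eq_abs, ht]; exact half_lt_self hε)
  have h_midpoint : u ∈ openSegment ℝ (u + (ε / 2) • v) (u + (-(ε / 2)) • v) :=
    ⟨1 / 2, 1 / 2, by norm_num, by norm_num, by norm_num, by module⟩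
  have h_eq : u + (ε / 2) • v = u :=
    hu.2 (h_mem _ (abs_of_pos (half_pos hε)))
      (h_mem _ (by rw [abs_neg, abs_of_pos (half_pos hε)])) h_midpoint
  exact (smul_eq_zero.1 (add_eq_left.1 h_eq)).resolve_left (half_pos hε).ne'

lemma exists_mem_extremePoints_apply_eq_of_isMaxOn {E : Type*} [AddCommGroup E] [Module ℝ E]
    [TopologicalSpace E] [T2Space E] [IsTopologicalAddGroup E] [ContinuousSMul ℝ E]
    [LocallyConvexSpace ℝ E] {s : Set E} (hs : IsCompact s) (l : E →L[ℝ] ℝ) {u₀ : E}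
    (hu₀ : u₀ ∈ s) (h_max : IsMaxOn l s u₀) :
    ∃ u ∈ s.extremePoints ℝ, l u = l u₀ := by
  have h_exposed : IsExposed ℝ s (l.toExposed s) := ContinuousLinearMap.toExposed.isExposed
  obtain ⟨u, hu⟩ := (h_exposed.isCompact hs).extremePoints_nonempty ⟨u₀, hu₀, h_max⟩
  exact ⟨u, h_exposed.isExtreme.extremePoints_subset_extremePoints hu,
    (h_max hu.1.1).antisymm (hu.1.2 u₀ hu₀)⟩

lemma exists_finset_card_eq_finrank_of_separating {K E J : Type*} [Field K] [AddCommGroup E]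
    [Module K E] [FiniteDimensional K E] (f : J → Module.Dual K E) {T : Set J}
    (hT : ∀ v, (∀ x ∈ T, f x v = 0) → v = 0) :
    ∃ D : Finset J, ↑D ⊆ T ∧ D.card = Module.finrank K E ∧
      ∀ v, (∀ x ∈ D, f x v = 0) → v = 0 := by
  classical
  have h_span_top : Submodule.span K (range fun x : T => f x) = ⊤ :=
    Submodule.span_eq_top_of_ne_zero fun v hv => by
      by_contra! h_zero
      exact hv (hT v fun x hx => h_zero _ ⟨⟨x, hx⟩, rfl⟩)
  obtain ⟨α, g, hg, h_span, h_indep⟩ := exists_linearIndependent' K fun x : T => f x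
  have := h_indep.finite
  have := Fintype.ofFinite α
  rw [h_span_top] at h_span
  refine ⟨Finset.univ.image (Subtype.val ∘ g), fun x hx => ?_, ?_, fun v hv => ?_⟩
  · obtain ⟨i, -, rfl⟩ := Finset.mem_image.1 hx
    exact (g i).2
  · rw [Finset.card_image_of_injective _ (Subtype.val_injective.comp hg), Finset.card_univ,
      ← Module.finrank_eq_card_basis (Module.Basis.mk h_indep h_span.ge),
      Subspace.dual_finrank_eq]
  · refine (Module.forall_dual_apply_eq_zero_iff K v).1 fun φ => ?_
    suffices Submodule.span K (range ((fun x : T => f x) ∘ g)) ≤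
        LinearMap.ker (Module.Dual.eval K E v) from this (h_span ▸ Submodule.mem_top)
    rw [Submodule.span_le]
    rintro _ ⟨i, rfl⟩
    exact hv _ (Finset.mem_image_of_mem _ (Finset.mem_univ i))

variable {ι κ : Type*} [Fintype κ]

/-- The polyhedron of those `u` with `t • (A *ᵥ u) x ≤ b x` for every row `x` of `A` and every sign
`t` in `signs x`. The signs record which of the two one-sided bounds on a row are imposed. -/
def signedPolyhedron (A : Matrix ι κ ℝ) (signs : ι → Set ℤˣ) (b : ι → ℝ) : Set (κ → ℝ) :=
  {u | ∀ x, ∀ t ∈ signs x, t • (A *ᵥ u) x ≤ b x}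

lemma isClosed_signedPolyhedron (A : Matrix ι κ ℝ) (signs : ι → Set ℤˣ) (b : ι → ℝ) :
    IsClosed (signedPolyhedron A signs b) := by
  simp only [signedPolyhedron, ofPred_forall]
  refine isClosed_iInter fun x => isClosed_iInter fun t => isClosed_iInter fun _ =>
    isClosed_le ?_ continuous_const
  have h_mulVec : Continuous fun u : κ → ℝ => A *ᵥ u :=
    continuous_const.matrix_mulVec continuous_id
  exact ((continuous_apply x).comp h_mulVec).const_smul t

lemma exists_vertex_of_tight [Finite ι] (A : Matrix ι κ ℝ) {signs : ι → Set ℤˣ} {b : ι → ℝ}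
    (h_compact : IsCompact (signedPolyhedron A signs b)) {u₀ : κ → ℝ}
    (hu₀ : u₀ ∈ signedPolyhedron A signs b) {x₀ : ι} {t₀ : ℤˣ} (ht₀ : t₀ ∈ signs x₀)
    (h_tight : t₀ • (A *ᵥ u₀) x₀ = b x₀) :
    ∃ u ∈ signedPolyhedron A signs b, t₀ • (A *ᵥ u) x₀ = b x₀ ∧
      ∀ v, (∀ x, ∀ t ∈ signs x, t • (A *ᵥ u) x = b x → (A *ᵥ v) x = 0) → v = 0 := by
  let f (p : Σ x, signs x) : (κ → ℝ) →ₗ[ℝ] ℝ := p.2.1 • LinearMap.proj p.1 ∘ₗ A.mulVecLin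
  have h_poly : signedPolyhedron A signs b = {u | ∀ p, f p u ≤ b p.1} := by
    ext u
    simp [signedPolyhedron, f, Sigma.forall]
  obtain ⟨u, hu, hu_max⟩ := exists_mem_extremePoints_apply_eq_of_isMaxOn h_compact
    (f ⟨x₀, t₀, ht₀⟩).toContinuousLinearMap hu₀ fun v hv => (hv x₀ t₀ ht₀).trans_eq h_tight.symm
  refine ⟨u, hu.1, hu_max.trans h_tight, fun v hv => ?_⟩
  rw [h_poly] at hu
  refine eq_zero_of_mem_extremePoints_of_tight f (fun p => b p.1) hu fun p hp => ?_
  have h_zero : (A *ᵥ v) p.1 = 0 := hv p.1 p.2 p.2.2 hp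
  simp [f, h_zero]

lemma exists_submatrix_injective_of_tight [Finite ι] (A : Matrix ι κ ℝ) {signs : ι → Set ℤˣ}
    {b : ι → ℝ} (h_compact : IsCompact (signedPolyhedron A signs b)) {u₀ : κ → ℝ}
    (hu₀ : u₀ ∈ signedPolyhedron A signs b) {x₀ : ι} {t₀ : ℤˣ} (ht₀ : t₀ ∈ signs x₀)
    (h_tight : t₀ • (A *ᵥ u₀) x₀ = b x₀) :
    ∃ u ∈ signedPolyhedron A signs b, t₀ • (A *ᵥ u) x₀ = b x₀ ∧
      ∃ (D : Finset ι) (s : D → ℤˣ), D.card = Fintype.card κ ∧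
        (∀ x : D, s x ∈ signs x ∧ (A *ᵥ u) x = s x • b x) ∧
        Function.Injective (A.submatrix ((↑) : D → ι) id).mulVec := by
  obtain ⟨u, hu, hu_tight, hu_sep⟩ := exists_vertex_of_tight A h_compact hu₀ ht₀ h_tight
  obtain ⟨D, hD_tight, hD_card, hD_sep⟩ := exists_finset_card_eq_finrank_of_separating
    (fun x => LinearMap.proj x ∘ₗ A.mulVecLin) (T := {x | ∃ t ∈ signs x, t • (A *ᵥ u) x = b x})
    fun v hv => hu_sep v fun x t ht htx => hv x ⟨t, ht, htx⟩
  choose s hs using fun x : D => hD_tight x.2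
  refine ⟨u, hu, hu_tight, D, s, by simpa using hD_card, fun x => ⟨(hs x).1, ?_⟩, ?_⟩
  · rw [← (hs x).2, smul_smul, Int.units_mul_self, one_smul]
  · refine (injective_iff_map_eq_zero (A.submatrix ((↑) : D → ι) id).mulVecLin).2 fun v hv => ?_
    exact hD_sep v fun x hx => congrFun hv ⟨x, hx⟩

end Vertices

section LeastSquares

variable {m n : Type*} [Fintype m] [Fintype n] [DecidableEq n]

/-- The least squares solution of `A *ᵥ u = b` for `A` of full column rank, as an explicit rational
(hence measurable) function of `A`. For other `A` the inverse, and so the value, is `0`. -/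
noncomputable def leastSquares (A : Matrix m n ℝ) (b : m → ℝ) : n → ℝ :=
  (Aᵀ * A)⁻¹ *ᵥ (Aᵀ *ᵥ b)

lemma leastSquares_eq_of_mulVec_eq {A : Matrix m n ℝ} (hA : Function.Injective A.mulVec)
    {b : m → ℝ} {u : n → ℝ} (hu : A *ᵥ u = b) : leastSquares A b = u := by
  have h_unit : IsUnit (Aᵀ * A) := by
    rw [← Matrix.mulVec_injective_iff_isUnit, ← Matrix.coe_mulVecLin, ← LinearMap.ker_eq_bot,
      Matrix.ker_mulVecLin_transpose_mul_self, LinearMap.ker_eq_bot]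
    exact hA
  rw [leastSquares, ← hu, Matrix.mulVec_mulVec, Matrix.mulVec_mulVec, Matrix.mul_assoc,
    Matrix.nonsing_inv_mul _ ((Matrix.isUnit_iff_isUnit_det _).1 h_unit), Matrix.one_mulVec]

lemma measurable_leastSquares_of_continuous {X : Type*} [TopologicalSpace X] [MeasurableSpace X]
    [OpensMeasurableSpace X] {A : X → Matrix m n ℝ} (hA : Continuous A) (b : m → ℝ) :
    Measurable fun x => leastSquares (A x) b := by
  have h_gram : Continuous fun x => (A x)ᵀ * A x := hA.matrix_transpose.matrix_mul hA
  have h_adjugate : Continuous fun x => ((A x)ᵀ * A x).adjugate *ᵥ ((A x)ᵀ *ᵥ b) :=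
    h_gram.matrix_adjugate.matrix_mulVec (hA.matrix_transpose.matrix_mulVec continuous_const)
  simp only [leastSquares, Matrix.inv_def, Ring.inverse_eq_inv', Matrix.smul_mulVec]
  exact h_gram.matrix_det.measurable.inv.smul h_adjugate.measurable

end LeastSquares

section DependentBox

lemma pi_dependentBox_le {ι : Type*} [Fintype ι] [DecidableEq ι] {X : ι → Type*}
    [∀ i, MeasurableSpace (X i)] (μ : ∀ i, Measure (X i)) [∀ i, SigmaFinite (μ i)] (B : Finset ι)
    (A : ∀ i, Set (X i)) (K : (∀ i, X i) → ∀ i, Set (X i))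
    (hK_congr : ∀ W W', (∀ j ∈ B, W j = W' j) → ∀ j ∉ B, K W j = K W' j) {q : ι → ℝ≥0∞}
    (hKq : ∀ W, ∀ j ∉ B, μ j (K W j) ≤ q j)
    (h_meas : MeasurableSet {W | (∀ j ∈ B, W j ∈ A j) ∧ ∀ j ∉ B, W j ∈ K W j}) :
    Measure.pi μ {W | (∀ j ∈ B, W j ∈ A j) ∧ ∀ j ∉ B, W j ∈ K W j} ≤
      (∏ j ∈ B, μ j (A j)) * ∏ j ∈ Bᶜ, q j := by
  set E := {W : ∀ i, X i | (∀ j ∈ B, W j ∈ A j) ∧ ∀ j ∉ B, W j ∈ K W j}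
  let e := MeasurableEquiv.piEquivPiSubtypeProd X (· ∈ B)
  let ν := Measure.pi fun i : {i // i ∉ B} => μ i
  have he_mem (x y) (j) (hj : j ∈ B) : e.symm (x, y) j = x ⟨j, hj⟩ := dif_pos hj
  have he_notMem (x y) (j) (hj : j ∉ B) : e.symm (x, y) j = y ⟨j, hj⟩ := dif_neg hj
  have h_slice (x) : ν (Prod.mk x ⁻¹' (e.symm ⁻¹' E)) ≤
      (univ.pi fun j : B => A j).indicator (fun _ => ∏ j ∈ Bᶜ, q j) x := by
    rcases (Prod.mk x ⁻¹' (e.symm ⁻¹' E)).eq_empty_or_nonempty with h_empty | ⟨y₀, hy₀⟩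
    · simp [h_empty]
    have hx : x ∈ univ.pi fun j : B => A j := fun j _ => he_mem x y₀ j j.2 ▸ hy₀.1 j j.2
    have h_subset : Prod.mk x ⁻¹' (e.symm ⁻¹' E) ⊆
        univ.pi fun j : {i // i ∉ B} => K (e.symm (x, y₀)) j := fun y hy j _ => by
      beta_reduce
      rw [hK_congr _ (e.symm (x, y)) (fun i hi => by rw [he_mem _ _ i hi, he_mem _ _ i hi]) _ j.2]
      exact he_notMem x y j j.2 ▸ hy.2 j j.2
    rw [indicator_of_mem hx, Finset.prod_subtype Bᶜ (fun _ => Finset.mem_compl)]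
    exact (measure_mono h_subset).trans ((Measure.pi_pi _ _).trans_le
      (Finset.prod_le_prod' fun j _ => hKq _ j j.2))
  calc Measure.pi μ E
      = ((Measure.pi fun i : B => μ i).prod ν) (e.symm ⁻¹' E) := by
        convert ((measurePreserving_piEquivPiSubtypeProd μ (· ∈ B)).symm.measure_preimage
          h_meas.nullMeasurableSet).symm
    _ = ∫⁻ x, ν (Prod.mk x ⁻¹' (e.symm ⁻¹' E)) ∂Measure.pi fun i : B => μ i :=
        Measure.prod_apply (e.symm.measurable h_meas)
    _ ≤ (∏ j ∈ Bᶜ, q j) * (Measure.pi fun i : B => μ i) (univ.pi fun j : B => A j) :=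
        (lintegral_mono h_slice).trans (lintegral_indicator_const_le _ _)
    _ = (∏ j ∈ B, μ j (A j)) * ∏ j ∈ Bᶜ, q j := by
        rw [Measure.pi_pi, Finset.prod_coe_sort B fun j => μ j (A j), mul_comm]

end DependentBox

section VertexUnionBound

variable {ι κ : Type*} [Fintype κ]

lemma of_mulVec_apply (W : ι → κ → ℝ) (u : κ → ℝ) (j : ι) : (Matrix.of W *ᵥ u) j = W j ⬝ᵥ u :=
  rfl

/-- The rows `w` such that `u` satisfies the constraint `t • (w ⬝ᵥ u) ≤ h` for every sign `t` that
is active at `w`. -/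
def compatibleRows (active : ℤˣ → Set (κ → ℝ)) (h : ℝ) (u : κ → ℝ) : Set (κ → ℝ) :=
  {w | ∀ t, w ∈ active t → t • (w ⬝ᵥ u) ≤ h}

/-- The vertex candidate determined by the constraints in `D`, with signs `s`: the solution of
`s x • (A *ᵥ u) x = b x` for `x ∈ D`, where `A` consists of the rows of `W` (with bound `h`)
followed by the coordinate functionals (with bound `r`). -/
noncomputable def tightSolution [DecidableEq κ] (h r : ℝ) (D : Finset (ι ⊕ κ)) (s : D → ℤˣ)
    (W : ι → κ → ℝ) : κ → ℝ :=
  leastSquares ((Matrix.fromRows (Matrix.of W) 1).submatrix ((↑) : D → ι ⊕ κ) id)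
    fun x => s x • Sum.elim (fun _ => h) (fun _ => r) (x : ι ⊕ κ)

lemma pi_norm_le_iff_forall_units_smul_le {u : κ → ℝ} {r : ℝ} (hr : 0 ≤ r) :
    ‖u‖ ≤ r ↔ ∀ i, ∀ t : ℤˣ, t • u i ≤ r := by
  simp_rw [pi_norm_le_iff_of_nonneg hr, Real.norm_eq_abs, abs_le']
  refine forall_congr' fun i =>
    ⟨fun h t => ?_, fun h => ⟨by simpa using h 1, by simpa using h (-1)⟩⟩
  rcases Int.units_eq_one_or t with rfl | rfl
  · simpa using h.1
  · simpa using h.2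

lemma exists_units_smul_eq_norm {u : κ → ℝ} (hu : u ≠ 0) : ∃ i, ∃ t : ℤˣ, t • u i = ‖u‖ := by
  have : Nonempty κ := by
    by_contra h_empty
    rw [not_nonempty_iff] at h_empty
    exact hu (Subsingleton.elim _ _)
  obtain ⟨i, hi⟩ := Finite.exists_max fun i => ‖u i‖
  have h_norm : |u i| = ‖u‖ :=
    (norm_le_pi_norm u i).antisymm ((pi_norm_le_iff_of_nonneg (norm_nonneg _)).2 hi)
  rw [← h_norm]
  rcases abs_choice (u i) with h_abs | h_abs
  · exact ⟨i, 1, by simpa using h_abs.symm⟩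
  · exact ⟨i, -1, by simpa using h_abs.symm⟩

variable [DecidableEq κ]

lemma tightSolution_congr {h r : ℝ} {D : Finset (ι ⊕ κ)} {s : D → ℤˣ} {W W' : ι → κ → ℝ}
    (hW : ∀ j ∈ D.toLeft, W j = W' j) : tightSolution h r D s W = tightSolution h r D s W' := by
  unfold tightSolution
  congr 1
  ext ⟨j | i, hx⟩ a
  · simp [hW j (Finset.mem_toLeft.2 hx)]
  · simp

lemma measurable_tightSolution [Finite ι] (h r : ℝ) (D : Finset (ι ⊕ κ)) (s : D → ℤˣ) :
    Measurable (tightSolution h r D s) := by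
  have := Fintype.ofFinite ι
  refine measurable_leastSquares_of_continuous (continuous_matrix ?_) _
  rintro ⟨j | i, hx⟩ a
  · simp only [Matrix.submatrix_apply, Matrix.fromRows_apply_inl, Matrix.of_apply]
    fun_prop
  · simp only [Matrix.submatrix_apply, Matrix.fromRows_apply_inr]
    fun_prop

lemma exists_tightSolution_of_compatible [Finite ι] {active : ℤˣ → Set (κ → ℝ)} {h r : ℝ}
    (hr : 0 < r) {W : ι → κ → ℝ} {u₀ : κ → ℝ} (hu₀ : ‖u₀‖ = r)
    (hW : ∀ j, W j ∈ compatibleRows active h u₀) :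
    ∃ (D : Finset (ι ⊕ κ)) (s : D → ℤˣ), D.card = Fintype.card κ ∧
      (∀ j (hj : Sum.inl j ∈ D), W j ∈ active (s ⟨_, hj⟩)) ∧
      ‖tightSolution h r D s W‖ = r ∧
      ∀ j, W j ∈ compatibleRows active h (tightSolution h r D s W) := by
  let A : Matrix (ι ⊕ κ) κ ℝ := Matrix.fromRows (Matrix.of W) 1
  let signs : ι ⊕ κ → Set ℤˣ := Sum.elim (fun j => {t | W j ∈ active t}) fun _ => univ
  let b : ι ⊕ κ → ℝ := Sum.elim (fun _ => h) fun _ => r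
  have h_mem (u : κ → ℝ) : u ∈ signedPolyhedron A signs b ↔
      (∀ j, W j ∈ compatibleRows active h u) ∧ ‖u‖ ≤ r := by
    rw [pi_norm_le_iff_forall_units_smul_le hr.le]
    simp [signedPolyhedron, A, signs, b, Matrix.fromRows_mulVec, compatibleRows, of_mulVec_apply]
  have h_compact : IsCompact (signedPolyhedron A signs b) :=
    Metric.isCompact_of_isClosed_isBounded (isClosed_signedPolyhedron A signs b)
      (Metric.isBounded_closedBall.subset fun u hu => mem_closedBall_zero_iff.2 ((h_mem u).1 hu).2)
  obtain ⟨i₀, t₀, h_tight⟩ := exists_units_smul_eq_norm (norm_pos_iff.1 (hu₀ ▸ hr))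
  obtain ⟨u, hu, hu_tight, D, s, hD_card, hs, hD_inj⟩ := exists_submatrix_injective_of_tight A
    h_compact ((h_mem u₀).2 ⟨hW, hu₀.le⟩) (x₀ := Sum.inr i₀) (t₀ := t₀) (mem_univ _)
    (by simpa [A, b, Matrix.fromRows_mulVec, hu₀] using h_tight)
  have h_sol : tightSolution h r D s W = u :=
    leastSquares_eq_of_mulVec_eq hD_inj (funext fun x => (hs x).2)
  obtain ⟨hu_compatible, hu_norm⟩ := (h_mem u).1 hu
  refine ⟨D, s, hD_card, fun j hj => (hs ⟨_, hj⟩).1, ?_, fun j => h_sol ▸ hu_compatible j⟩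
  rw [h_sol]
  refine hu_norm.antisymm ?_
  have hu_coord : t₀ • u i₀ = r := by simpa [A, b, Matrix.fromRows_mulVec] using hu_tight
  exact hu_coord ▸ (pi_norm_le_iff_forall_units_smul_le (norm_nonneg u)).1 le_rfl i₀ t₀

/-- The event that the vertex candidate determined by `D` and `s` is an admissible vertex: the
constraints in `D` are active, and the remaining rows, conditionally independent of the candidate,
are compatible with it. -/
def vertexEvent (active : ℤˣ → Set (κ → ℝ)) (h r : ℝ) (D : Finset (ι ⊕ κ)) (s : D → ℤˣ) :
    Set (ι → κ → ℝ) :=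
  {W | (∀ j ∈ D.toLeft, W j ∈ {w | ∀ hj : Sum.inl j ∈ D, w ∈ active (s ⟨_, hj⟩)}) ∧
    ∀ j ∉ D.toLeft, W j ∈ {w | ‖tightSolution h r D s W‖ = r ∧
      w ∈ compatibleRows active h (tightSolution h r D s W)}}

lemma measurableSet_vertexEvent [Finite ι] {active : ℤˣ → Set (κ → ℝ)}
    (h_active : ∀ t, MeasurableSet (active t)) (h r : ℝ) (D : Finset (ι ⊕ κ)) (s : D → ℤˣ) :
    MeasurableSet (vertexEvent active h r D s) := by
  have h_sol := measurable_tightSolution h r D s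
  have h_act (j : ι) (t : ℤˣ) : MeasurableSet {W : ι → κ → ℝ | W j ∈ active t} :=
    measurable_pi_apply j (h_active t)
  have h_sphere : MeasurableSet {W | ‖tightSolution h r D s W‖ = r} :=
    measurableSet_eq_fun h_sol.norm measurable_const
  have h_dot (j : ι) (t : ℤˣ) :
      MeasurableSet {W : ι → κ → ℝ | t • (W j ⬝ᵥ tightSolution h r D s W) ≤ h} := by
    refine measurableSet_le ?_ measurable_const
    unfold dotProduct
    fun_prop
  have h_compat (j : ι) :
      MeasurableSet {W | W j ∈ compatibleRows active h (tightSolution h r D s W)} :=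
    measurableSet_setOfPred.2 <| .forall fun t => (h_act j t).mem.imp (h_dot j t).mem
  refine measurableSet_setOfPred.2 <| .and (.forall fun j => ?_) (.forall fun j => ?_)
  · exact measurable_const.imp <| .forall fun hj => (h_act j _).mem
  · exact measurable_const.imp <| h_sphere.mem.and (h_compat j).mem

variable [Fintype ι] [DecidableEq ι]

lemma pi_vertexEvent_le (μ : Measure (κ → ℝ)) [SigmaFinite μ]
    {active : ℤˣ → Set (κ → ℝ)} (h_active : ∀ t, MeasurableSet (active t)) {h r : ℝ} {q : ℝ≥0∞}
    (hq : ∀ u, ‖u‖ = r → μ (compatibleRows active h u) ≤ q) (D : Finset (ι ⊕ κ)) (s : D → ℤˣ) :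
    Measure.pi (fun _ : ι => μ) (vertexEvent active h r D s) ≤
      (∏ x : D, Sum.elim (fun _ => μ (active (s x))) (fun _ => 1) (x : ι ⊕ κ)) *
        q ^ D.toLeftᶜ.card := by
  let A (j : ι) : Set (κ → ℝ) := {w | ∀ hj : Sum.inl j ∈ D, w ∈ active (s ⟨_, hj⟩)}
  let K (W : ι → κ → ℝ) (_ : ι) : Set (κ → ℝ) :=
    {w | ‖tightSolution h r D s W‖ = r ∧ w ∈ compatibleRows active h (tightSolution h r D s W)}
  have hK_congr (W W' : ι → κ → ℝ) (hW : ∀ j ∈ D.toLeft, W j = W' j) (j : ι) : K W j = K W' j := by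
    simp only [K, tightSolution_congr hW]
  have hK_le (W : ι → κ → ℝ) (j : ι) : μ (K W j) ≤ q := by
    by_cases h_norm : ‖tightSolution h r D s W‖ = r
    · exact (measure_mono fun w hw => hw.2).trans (hq _ h_norm)
    · simp [K, h_norm]
  have h_prod : ∏ j ∈ D.toLeft, μ (A j) =
      ∏ x : D, Sum.elim (fun _ => μ (active (s x))) (fun _ => 1) (x : ι ⊕ κ) := by
    have h_elim (x : D) : Sum.elim (fun _ => μ (active (s x))) (fun _ => 1) (x : ι ⊕ κ) =
        Sum.elim (fun j => μ (A j)) (fun _ => 1) (x : ι ⊕ κ) := by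
      rcases x with ⟨j | i, hx⟩
      · simp [A, hx]
      · rfl
    rw [Fintype.prod_congr _ _ h_elim,
      Finset.prod_coe_sort D (Sum.elim (fun j => μ (A j)) fun _ => 1),
      Finset.prod_sum_eq_prod_toLeft_mul_prod_toRight]
    simp
  rw [← h_prod, ← Finset.prod_const]
  exact pi_dependentBox_le (fun _ => μ) D.toLeft A K (fun W W' hW j _ => hK_congr W W' hW j)
    (fun W j _ => hK_le W j) (measurableSet_vertexEvent h_active h r D s)

lemma sum_pi_vertexEvent_le (μ : Measure (κ → ℝ)) [SigmaFinite μ]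
    {active : ℤˣ → Set (κ → ℝ)} (h_active : ∀ t, MeasurableSet (active t)) {h r : ℝ} {q : ℝ≥0∞}
    (h_active_le : ∑ t, μ (active t) ≤ 2 * q)
    (hq : ∀ u, ‖u‖ = r → μ (compatibleRows active h u) ≤ q) (D : Finset (ι ⊕ κ)) :
    ∑ s, Measure.pi (fun _ : ι => μ) (vertexEvent active h r D s) ≤
      2 ^ D.card * q ^ Fintype.card ι := by
  calc ∑ s, Measure.pi (fun _ : ι => μ) (vertexEvent active h r D s)
      ≤ ∑ s : D → ℤˣ, (∏ x : D, Sum.elim (fun _ => μ (active (s x))) (fun _ => 1) (x : ι ⊕ κ)) *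
          q ^ D.toLeftᶜ.card :=
        Finset.sum_le_sum fun s _ => pi_vertexEvent_le μ h_active hq D s
    _ = (∏ x : D, ∑ t, Sum.elim (fun _ => μ (active t)) (fun _ => 1) (x : ι ⊕ κ)) *
          q ^ D.toLeftᶜ.card := by
        rw [← Finset.sum_mul, Finset.prod_univ_sum, Fintype.piFinset_univ]
    _ ≤ (∏ x : D, Sum.elim (fun _ => 2 * q) (fun _ => 2) (x : ι ⊕ κ)) *
          q ^ D.toLeftᶜ.card := by
        gcongr with x
        rcases x with ⟨j | i, hx⟩
        · exact h_active_le
        · simp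
    _ = 2 ^ D.card * q ^ Fintype.card ι := by
        rw [Finset.prod_coe_sort D (Sum.elim (fun _ => 2 * q) fun _ => 2),
          Finset.prod_sum_eq_prod_toLeft_mul_prod_toRight]
        simp only [Sum.elim_inl, Sum.elim_inr, Finset.prod_const]
        rw [← Finset.card_toLeft_add_card_toRight (u := D), ← Finset.card_add_card_compl D.toLeft]
        ring

end VertexUnionBound

lemma pi_exists_compatible_le {ι κ : Type*} [Fintype ι] [Fintype κ]
    (μ : Measure (κ → ℝ)) [SigmaFinite μ]
    {active : ℤˣ → Set (κ → ℝ)} (h_active : ∀ t, MeasurableSet (active t)) {h r : ℝ} (hr : 0 < r)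
    {q : ℝ≥0∞} (h_active_le : ∑ t, μ (active t) ≤ 2 * q)
    (hq : ∀ u, ‖u‖ = r → μ (compatibleRows active h u) ≤ q) :
    Measure.pi (fun _ : ι => μ) {W | ∃ u, ‖u‖ = r ∧ ∀ j, W j ∈ compatibleRows active h u} ≤
      (Fintype.card ι + Fintype.card κ).choose (Fintype.card κ) * 2 ^ Fintype.card κ *
        q ^ Fintype.card ι := by
  classical
  let choices : Finset (Finset (ι ⊕ κ)) := Finset.powersetCard (Fintype.card κ) Finset.univ
  have h_cover : {W : ι → κ → ℝ | ∃ u, ‖u‖ = r ∧ ∀ j, W j ∈ compatibleRows active h u} ⊆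
      ⋃ D ∈ choices, ⋃ s, vertexEvent active h r D s := by
    rintro W ⟨u, hu, hW⟩
    obtain ⟨D, s, hD, h_act, h_norm, h_compat⟩ := exists_tightSolution_of_compatible hr hu hW
    simp only [mem_iUnion]
    exact ⟨D, Finset.mem_powersetCard_univ.2 hD, s, fun j _ hj => h_act j hj,
      fun j _ => ⟨h_norm, h_compat j⟩⟩
  calc _ ≤ ∑ D ∈ choices, ∑ s, Measure.pi (fun _ : ι => μ) (vertexEvent active h r D s) :=
        (measure_mono h_cover).trans <| (measure_biUnion_finset_le _ _).trans <|
          Finset.sum_le_sum fun D _ => measure_iUnion_fintype_le _ _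
    _ ≤ ∑ D ∈ choices, 2 ^ Fintype.card κ * q ^ Fintype.card ι :=
        Finset.sum_le_sum fun D hD => by
          have := sum_pi_vertexEvent_le μ h_active h_active_le hq D
          rwa [Finset.mem_powersetCard_univ.1 hD] at this
    _ = _ := by
        rw [Finset.sum_const, Finset.card_powersetCard, Finset.card_univ, Fintype.card_sum,
          nsmul_eq_mul, mul_assoc]

section SingleLayer

lemma choose_mul_pow_le_one_add_pow {x : ℝ} (hx : 0 ≤ x) (m k : ℕ) :
    m.choose k * x ^ k ≤ (1 + x) ^ m := by
  rcases lt_or_ge m k with h_lt | h_le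
  · rw [Nat.choose_eq_zero_of_lt h_lt, Nat.cast_zero, zero_mul]
    positivity
  · rw [add_comm, add_pow]
    simp only [one_pow, mul_one]
    rw [mul_comm]
    exact Finset.single_le_sum (f := fun i => x ^ i * (m.choose i : ℝ))
      (fun i _ => by positivity) (Finset.mem_range_succ_iff.2 h_le)

-- The weight `1 / 5` nearly minimises `(1 + x) ^ 6 / x`.
lemma choose_mul_two_pow_mul_pow_le {n k : ℕ} (hnk : 5 * k ≤ n) :
    ((n + k).choose k : ℝ≥0∞) * 2 ^ k * ENNReal.ofReal (101 / 200) ^ n ≤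
      ENNReal.ofReal ((197 / 200) ^ k) := by
  obtain ⟨m, rfl⟩ := Nat.exists_eq_add_of_le hnk
  have h_choose := choose_mul_pow_le_one_add_pow (x := 1 / 5) (by norm_num) (5 * k + m + k) k
  have h_real : ((5 * k + m + k).choose k : ℝ) * 2 ^ k * (101 / 200) ^ (5 * k + m) ≤
      (197 / 200) ^ k := by
    calc ((5 * k + m + k).choose k : ℝ) * 2 ^ k * (101 / 200) ^ (5 * k + m)
        = ((5 * k + m + k).choose k * (1 / 5) ^ k) * (10 ^ k * (101 / 200) ^ (5 * k + m)) := by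
          rw [show (10 : ℝ) = 5 * 2 by norm_num, mul_pow, one_div, inv_pow]
          field_simp
      _ ≤ (1 + 1 / 5) ^ (5 * k + m + k) * (10 ^ k * (101 / 200) ^ (5 * k + m)) := by gcongr
      _ = ((1 + 1 / 5) ^ 6 * 10 * (101 / 200) ^ 5) ^ k * ((1 + 1 / 5) * (101 / 200)) ^ m := by
          rw [show 5 * k + m + k = 6 * k + m by ring]
          simp only [mul_pow, pow_add, pow_mul]
          ring
      _ ≤ (197 / 200) ^ k * 1 := by
          gcongr
          · norm_num
          · exact pow_le_one₀ (by norm_num) (by norm_num)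
      _ = (197 / 200) ^ k := mul_one _
  refine le_of_eq_of_le ?_ (ENNReal.ofReal_le_ofReal h_real)
  rw [ENNReal.ofReal_mul (by positivity), ENNReal.ofReal_mul (by positivity),
    ENNReal.ofReal_pow (by norm_num), ENNReal.ofReal_pow (by norm_num)]
  simp

variable {ι κ : Type*} [Fintype κ]

/-- The rows `w` for which a neuron with weights `w` cannot distinguish `z` from `z + u`: the
constraints on `u` implied by `z + u` being `δ`-feasible for an observation that is `δ`-close to
the output of the neuron at `z`. -/
def confusableRows (δ : ℝ) (z u : κ → ℝ) : Set (κ → ℝ) :=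
  {w | w ⬝ᵥ z + w ⬝ᵥ u ≤ relu (w ⬝ᵥ z) + 2 * δ ∧ (2 * δ < w ⬝ᵥ z → -(2 * δ) ≤ w ⬝ᵥ u)}

/-- The pairs `(z, W)` for which some perturbation of `z` of norm `r` is confusable with `z` by
every row of `W`. -/
def confusablePairs (ι : Type*) (δ r : ℝ) : Set ((κ → ℝ) × (ι → κ → ℝ)) :=
  {p | ∃ u, ‖u‖ = r ∧ ∀ j, p.2 j ∈ confusableRows δ p.1 u}

lemma smul_mem_confusableRows {δ a : ℝ} (hδ : 0 ≤ δ) (ha₀ : 0 ≤ a) (ha₁ : a ≤ 1) {z u w : κ → ℝ}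
    (hw : w ∈ confusableRows δ z u) : w ∈ confusableRows δ z (a • u) := by
  obtain ⟨h_upper, h_lower⟩ := hw
  have h_relu : w ⬝ᵥ z ≤ relu (w ⬝ᵥ z) := le_max_left _ _
  simp only [confusableRows, mem_ofPred_eq, dotProduct_smul, smul_eq_mul]
  refine ⟨by nlinarith, fun h_active => ?_⟩
  nlinarith [h_lower h_active]

lemma confusablePairs_anti {δ r s : ℝ} (hδ : 0 ≤ δ) (hr : 0 ≤ r) (hrs : r ≤ s) :
    confusablePairs (κ := κ) ι δ s ⊆ confusablePairs ι δ r := by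
  rintro p ⟨u, hu, h_conf⟩
  rcases (hr.trans hrs).eq_or_lt with hs | hs
  · exact ⟨u, by linarith, h_conf⟩
  refine ⟨(r / s) • u, ?_, fun j => smul_mem_confusableRows hδ (by positivity)
    ((div_le_one hs).2 hrs) (h_conf j)⟩
  rw [norm_smul, hu, Real.norm_of_nonneg (by positivity), div_mul_cancel₀ _ hs.ne']

lemma isClosed_confusablePairs (δ r : ℝ) : IsClosed (confusablePairs (κ := κ) ι δ r) := by
  have h_row (j : ι) : IsClosed {p : ((κ → ℝ) × (ι → κ → ℝ)) × Metric.sphere (0 : κ → ℝ) r |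
      p.1.2 j ∈ confusableRows δ p.1.1 p.2} := by
    simp only [confusableRows, relu, imp_iff_not_or, not_lt, ofPred_and, ofPred_or]
    refine (isClosed_le ?_ ?_).inter ((isClosed_le ?_ ?_).union (isClosed_le ?_ ?_)) <;> fun_prop
  convert isClosedMap_fst_of_compactSpace _ (isClosed_iInter h_row)
  ext p
  simp [confusablePairs]

lemma mem_confusableRows_of_infFeasible {n k : ℕ} {W : Fin n → Fin k → ℝ} {y : Fin n → ℝ} {δ : ℝ}
    {x z : Fin k → ℝ} (hy : ∀ j, |y j - relu ((Matrix.of W *ᵥ z) j)| ≤ δ)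
    (hx : InfFeasible (Matrix.of W) y δ x) (j : Fin n) : W j ∈ confusableRows δ z (x - z) := by
  have hy_j := abs_le.1 (hy j)
  obtain ⟨h_active, h_inactive⟩ := hx j
  rw [of_mulVec_apply] at hy_j h_active h_inactive
  have h_upper : W j ⬝ᵥ x ≤ y j + δ := by
    rcases le_or_gt (y j) δ with h | h
    · exact h_inactive h
    · linarith [(abs_le.1 (h_active h)).2]
  rw [confusableRows, mem_ofPred_eq, dotProduct_sub]
  refine ⟨by linarith, fun h_gt => ?_⟩
  have h_relu : W j ⬝ᵥ z ≤ relu (W j ⬝ᵥ z) := le_max_left _ _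
  linarith [(abs_le.1 (h_active (by linarith))).1]

/-- The pairs `(z, W)` at which inverting the layer with weights `W` may amplify an error `δ` by
more than a factor `L`. -/
def unstablePairs (ι : Type*) (L δ : ℝ) : Set ((κ → ℝ) × (ι → κ → ℝ)) :=
  ⋃ m : ℕ, confusablePairs ι δ (L * δ + 1 / (m + 1))

lemma measurableSet_unstablePairs [Countable ι] (L δ : ℝ) :
    MeasurableSet (unstablePairs (κ := κ) ι L δ) :=
  .iUnion fun _ => (isClosed_confusablePairs δ _).measurableSet

lemma mem_unstablePairs {L δ : ℝ} (hL : 0 ≤ L) (hδ : 0 ≤ δ) {z u : κ → ℝ} {W : ι → κ → ℝ}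
    (hu : L * δ < ‖u‖) (h_conf : ∀ j, W j ∈ confusableRows δ z u) :
    (z, W) ∈ unstablePairs ι L δ := by
  obtain ⟨m, hm⟩ := exists_nat_one_div_lt (sub_pos.2 hu)
  exact mem_iUnion.2 ⟨m, confusablePairs_anti hδ (by positivity) (by linarith) ⟨u, rfl, h_conf⟩⟩

lemma norm_sub_le_of_infFeasible {n k : ℕ} {L δ : ℝ} (hL : 0 ≤ L) (hδ : 0 ≤ δ)
    {W : Fin n → Fin k → ℝ} {y : Fin n → ℝ} {x z : Fin k → ℝ}
    (hW : (z, W) ∉ unstablePairs (Fin n) L δ)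
    (hy : ∀ j, |y j - relu ((Matrix.of W *ᵥ z) j)| ≤ δ)
    (hx : InfFeasible (Matrix.of W) y δ x) : ‖x - z‖ ≤ L * δ := by
  by_contra! h_gt
  exact hW (mem_unstablePairs hL hδ h_gt (mem_confusableRows_of_infFeasible hy hx))

variable [Fintype ι]

lemma pi_confusablePairs_le_of_subset (hικ : 5 * Fintype.card κ ≤ Fintype.card ι)
    {active : ℤˣ → Set (κ → ℝ)} (h_active : ∀ t, MeasurableSet (active t)) {δ h r : ℝ} (hr : 0 < r)
    {z : κ → ℝ} (h_subset : ∀ u, confusableRows δ z u ⊆ compatibleRows active h u)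
    (h_active_le : ∑ t, stdGaussianVec κ (active t) ≤ 2 * ENNReal.ofReal (101 / 200))
    (h_compatible_le : ∀ u, ‖u‖ = r →
      stdGaussianVec κ (compatibleRows active h u) ≤ ENNReal.ofReal (101 / 200)) :
    Measure.pi (fun _ : ι => stdGaussianVec κ) {W | (z, W) ∈ confusablePairs ι δ r} ≤
      ENNReal.ofReal ((197 / 200) ^ Fintype.card κ) :=
  calc _ ≤ Measure.pi (fun _ : ι => stdGaussianVec κ)
          {W | ∃ u, ‖u‖ = r ∧ ∀ j, W j ∈ compatibleRows active h u} := by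
        refine measure_mono ?_
        rintro W ⟨u, hu, h_conf⟩
        exact ⟨u, hu, fun j => h_subset u (h_conf j)⟩
    _ ≤ _ := pi_exists_compatible_le _ h_active hr h_active_le h_compatible_le
    _ ≤ _ := choose_mul_two_pow_mul_pow_le hικ

lemma pi_confusablePairs_le_of_large (hικ : 5 * Fintype.card κ ≤ Fintype.card ι)
    {δ r : ℝ} (hδ : 0 ≤ δ) (hr : 0 < r) (hδr : 10 ^ 7 * δ ≤ r) {z : κ → ℝ} (hz : z ≠ 0)
    (hδz : 1000 * δ ≤ ‖toLp 2 z‖) :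
    Measure.pi (fun _ : ι => stdGaussianVec κ) {W | (z, W) ∈ confusablePairs ι δ r} ≤
      ENNReal.ofReal ((197 / 200) ^ Fintype.card κ) := by
  have hz_pos : 0 < ‖toLp 2 z‖ := by simpa using hz
  refine pi_confusablePairs_le_of_subset (active := fun _ => {w | 2 * δ < w ⬝ᵥ z}) (h := 2 * δ)
    hικ (fun _ => measurableSet_lt measurable_const (by unfold dotProduct; fun_prop)) hr ?_ ?_ ?_
  · rintro u w ⟨h_upper, h_lower⟩ t (hw : 2 * δ < w ⬝ᵥ z)
    rw [relu, max_eq_left (by linarith)] at h_upper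
    rcases Int.units_eq_one_or t with rfl | rfl
    · simpa using h_upper
    · simpa using neg_le.1 (h_lower hw)
  · have h_half : stdGaussianVec κ {w | 2 * δ < w ⬝ᵥ z} ≤ ENNReal.ofReal (101 / 200) :=
      (measure_mono fun w (hw : 2 * δ < w ⬝ᵥ z) => show 0 < w ⬝ᵥ z by linarith).trans <|
        (stdGaussianVec_dotProduct_pos_le z).trans (ENNReal.ofReal_le_ofReal (by norm_num))
    rw [Finset.sum_const, Finset.card_univ, Fintype.card_units_int, nsmul_eq_mul]
    gcongr
    exact le_rfl
  · intro u hu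
    have hu_le : r ≤ ‖toLp 2 u‖ := hu ▸ norm_le_norm_toLp_two u
    have hu_pos : 0 < ‖toLp 2 u‖ := hr.trans_le hu_le
    have h_cover : compatibleRows (fun _ => {w | 2 * δ < w ⬝ᵥ z}) (2 * δ) u ⊆
        {w | w ⬝ᵥ z ≤ 2 * δ} ∪ {w | |w ⬝ᵥ u| ≤ 2 * δ} := fun w hw =>
      (le_or_gt (w ⬝ᵥ z) (2 * δ)).imp_right fun h =>
        abs_le'.2 ⟨by simpa using hw 1 h, by simpa using hw (-1) h⟩
    refine (measure_mono h_cover).trans <| (measure_union_le _ _).trans <|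
      (add_le_add (stdGaussianVec_dotProduct_le_le hz (by positivity))
        (stdGaussianVec_abs_dotProduct_le_le (by simpa using hu_pos) (2 * δ))).trans ?_
    rw [← ENNReal.ofReal_add (by positivity) (by positivity)]
    refine ENNReal.ofReal_le_ofReal ?_
    have h_z : 2 * δ / ‖toLp 2 z‖ ≤ 1 / 500 := (div_le_iff₀ hz_pos).2 (by linarith)
    have h_u : 2 * (2 * δ) / ‖toLp 2 u‖ ≤ 1 / 500 := (div_le_iff₀ hu_pos).2 (by linarith)
    linarith

lemma pi_confusablePairs_le_of_small (hικ : 5 * Fintype.card κ ≤ Fintype.card ι)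
    {δ r : ℝ} (hδ : 0 ≤ δ) (hr : 0 < r) (hδr : 10 ^ 7 * δ ≤ r) {z : κ → ℝ}
    (hδz : ‖toLp 2 z‖ ≤ 1000 * δ) :
    Measure.pi (fun _ : ι => stdGaussianVec κ) {W | (z, W) ∈ confusablePairs ι δ r} ≤
      ENNReal.ofReal ((197 / 200) ^ Fintype.card κ) := by
  let active (t : ℤˣ) : Set (κ → ℝ) := {w | t = 1 ∧ -(20000 * δ) ≤ w ⬝ᵥ z}
  refine pi_confusablePairs_le_of_subset (active := active) (h := 20002 * δ) hικ ?_ hr ?_ ?_ ?_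
  · have h_dot : Measurable fun w : κ → ℝ => w ⬝ᵥ z := by unfold dotProduct; fun_prop
    exact fun t => (MeasurableSet.const (t = 1)).inter (measurableSet_le measurable_const h_dot)
  · rintro u w ⟨h_upper, -⟩ t ⟨rfl, hw⟩
    have h_relu : relu (w ⬝ᵥ z) ≤ w ⬝ᵥ z + 20000 * δ := max_le (by linarith) (by linarith)
    rw [one_smul]
    linarith
  · calc ∑ t, stdGaussianVec κ (active t) = stdGaussianVec κ (active 1) := by
          refine Fintype.sum_eq_single 1 fun t ht => ?_
          simp [active, ht]
      _ ≤ 1 := prob_le_one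
      _ ≤ ENNReal.ofReal (2 * (101 / 200)) := ENNReal.one_le_ofReal.2 (by norm_num)
      _ = 2 * ENNReal.ofReal (101 / 200) := by rw [ENNReal.ofReal_mul (by norm_num)]; simp
  · intro u hu
    have hu_le : r ≤ ‖toLp 2 u‖ := hu ▸ norm_le_norm_toLp_two u
    have hu_pos : 0 < ‖toLp 2 u‖ := hr.trans_le hu_le
    have h_cover : compatibleRows active (20002 * δ) u ⊆
        {w | w ⬝ᵥ z < -(20000 * δ)} ∪ {w | w ⬝ᵥ u ≤ 20002 * δ} := fun w hw =>
      (lt_or_ge (w ⬝ᵥ z) (-(20000 * δ))).imp_right fun h => by simpa using hw 1 ⟨rfl, h⟩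
    refine (measure_mono h_cover).trans <| (measure_union_le _ _).trans <|
      (add_le_add (stdGaussianVec_dotProduct_lt_neg_le (t := 1 / 20) (by positivity) (by linarith))
        (stdGaussianVec_dotProduct_le_le (by simpa using hu_pos) (by positivity))).trans ?_
    rw [← ENNReal.ofReal_add (by positivity) (by positivity)]
    refine ENNReal.ofReal_le_ofReal ?_
    have h_u : 20002 * δ / ‖toLp 2 u‖ ≤ 21 / 10000 := (div_le_iff₀ hu_pos).2 (by linarith)
    linarith

lemma pi_confusablePairs_le (hικ : 5 * Fintype.card κ ≤ Fintype.card ι)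
    {δ r : ℝ} (hδ : 0 ≤ δ) (hr : 0 < r) (hδr : 10 ^ 7 * δ ≤ r) (z : κ → ℝ) :
    Measure.pi (fun _ : ι => stdGaussianVec κ) {W | (z, W) ∈ confusablePairs ι δ r} ≤
      ENNReal.ofReal ((197 / 200) ^ Fintype.card κ) := by
  rcases le_or_gt (‖toLp 2 z‖) (1000 * δ) with hz | hz
  · exact pi_confusablePairs_le_of_small hικ hδ hr hδr hz
  · refine pi_confusablePairs_le_of_large hικ hδ hr hδr ?_ hz.le
    rintro rfl
    rw [toLp_zero, norm_zero] at hz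
    linarith

lemma pi_unstablePairs_le (hικ : 5 * Fintype.card κ ≤ Fintype.card ι) {δ : ℝ} (hδ : 0 ≤ δ)
    (z : κ → ℝ) :
    Measure.pi (fun _ : ι => stdGaussianVec κ) {W | (z, W) ∈ unstablePairs ι (10 ^ 7) δ} ≤
      ENNReal.ofReal ((197 / 200) ^ Fintype.card κ) := by
  have h_union : {W | (z, W) ∈ unstablePairs ι (10 ^ 7) δ} =
      ⋃ m : ℕ, {W | (z, W) ∈ confusablePairs ι δ (10 ^ 7 * δ + 1 / (m + 1))} := by
    ext W
    simp [unstablePairs]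
  have h_mono : Monotone fun m : ℕ =>
      {W | (z, W) ∈ confusablePairs ι δ (10 ^ 7 * δ + 1 / (m + 1))} := fun m m' hm W hW =>
    confusablePairs_anti hδ (by positivity) (by gcongr) hW
  rw [h_union, h_mono.measure_iUnion]
  exact iSup_le fun m => pi_confusablePairs_le hικ hδ (by positivity)
    (le_add_of_nonneg_right (by positivity)) z

end SingleLayer

section Network

instance (n k : ℕ) : IsProbabilityMeasure (stdGaussianMatrix n k) := by
  unfold stdGaussianMatrix; infer_instance

instance (d : ℕ) (n : ℕ → ℕ) : IsProbabilityMeasure (netGaussian d n) := by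
  unfold netGaussian; infer_instance

variable {d : ℕ} {n : ℕ → ℕ}

lemma extendW_apply (W : ∀ i : Fin d, Fin (n (i.1 + 1)) → Fin (n i.1) → ℝ) (i : Fin d) :
    extendW d n W i = W i :=
  dif_pos i.2

lemma layerOut_congr {W V : ∀ i : ℕ, Fin (n (i + 1)) → Fin (n i) → ℝ} (z : Fin (n 0) → ℝ) {i : ℕ}
    (hWV : ∀ j < i, W j = V j) : layerOut n W i z = layerOut n V i z := by
  induction i with
  | zero => rfl
  | succ i ih =>
    simp only [layerOut, hWV i i.lt_succ_self, ih fun j hj => hWV j (hj.trans i.lt_succ_self)]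

lemma measurable_extendW (i : ℕ) : Measurable fun W => extendW d n W i := by
  unfold extendW
  by_cases hi : i < d
  · simp only [hi, dite_true]
    exact measurable_pi_apply (⟨i, hi⟩ : Fin d)
  · simp only [hi, dite_false]
    exact measurable_const

lemma measurable_layerOut_extendW (z : Fin (n 0) → ℝ) (i : ℕ) :
    Measurable fun W => layerOut n (extendW d n W) i z := by
  induction i with
  | zero => exact measurable_const
  | succ i ih =>
    have h_weights := measurable_extendW (d := d) (n := n) i
    simp only [layerOut, relu, Matrix.mulVec, dotProduct, Matrix.of_apply]
    fun_prop

lemma infFeasible_of_abs_sub_relu_le {n k : ℕ} {W : Matrix (Fin n) (Fin k) ℝ} {y : Fin n → ℝ}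
    {δ : ℝ} {z : Fin k → ℝ} (hy : ∀ j, |y j - relu ((W *ᵥ z) j)| ≤ δ) : InfFeasible W y δ z := by
  intro j
  have hy_j := abs_le.1 (hy j)
  refine ⟨fun h_gt => ?_, fun _ => ?_⟩
  · have h_pos : 0 < relu ((W *ᵥ z) j) := by linarith
    have h_relu : relu ((W *ᵥ z) j) = (W *ᵥ z) j :=
      max_eq_left ((lt_max_iff.1 h_pos).resolve_right (lt_irrefl 0)).le
    rw [abs_sub_comm, ← h_relu]
    exact hy j
  · have h_relu : (W *ᵥ z) j ≤ relu ((W *ᵥ z) j) := le_max_left _ _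
    linarith

lemma exists_infFeasible_chain (W : ∀ i : ℕ, Fin (n (i + 1)) → Fin (n i) → ℝ) (z : Fin (n 0) → ℝ)
    {ε : ℝ} {e : Fin (n d) → ℝ} (he : ‖e‖ ≤ ε) {L : ℝ} (hL : 0 ≤ L) :
    ∃ zh : ∀ j : ℕ, Fin (n j) → ℝ, zh d = (fun j => layerOut n W d z j + e j) ∧
      ∀ i < d, InfFeasible (Matrix.of (W i)) (zh (i + 1)) (L ^ (d - (i + 1)) * ε) (zh i) := by
  have hε : 0 ≤ ε := (norm_nonneg e).trans he
  let zh := Function.update (fun j => layerOut n W j z) d fun j => layerOut n W d z j + e j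
  have h_last : zh d = fun j => layerOut n W d z j + e j := Function.update_self _ _ _
  have h_init {j : ℕ} (hj : j ≠ d) : zh j = layerOut n W j z := Function.update_of_ne hj _ _
  refine ⟨zh, h_last, fun i hi => ?_⟩
  rw [h_init hi.ne]
  refine infFeasible_of_abs_sub_relu_le fun j => ?_
  by_cases hid : i + 1 = d
  · subst hid
    simpa [h_last, layerOut] using (norm_le_pi_norm e j).trans he
  · rw [h_init hid, layerOut, sub_self, abs_zero]
    positivity

lemma norm_sub_layerOut_le {W : ∀ i : ℕ, Fin (n (i + 1)) → Fin (n i) → ℝ} {z : Fin (n 0) → ℝ}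
    {L ε : ℝ} (hL : 0 ≤ L) {zh : ∀ j : ℕ, Fin (n j) → ℝ}
    (h_last : ‖zh d - layerOut n W d z‖ ≤ ε)
    (h_stable : ∀ i < d, (layerOut n W i z, W i) ∉
      unstablePairs (Fin (n (i + 1))) L (L ^ (d - (i + 1)) * ε))
    (h_feasible : ∀ i < d,
      InfFeasible (Matrix.of (W i)) (zh (i + 1)) (L ^ (d - (i + 1)) * ε) (zh i))
    {j : ℕ} (hj : j ≤ d) : ‖zh j - layerOut n W j z‖ ≤ L ^ (d - j) * ε := by
  have hε : 0 ≤ ε := (norm_nonneg _).trans h_last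
  induction hj using Nat.decreasingInduction with
  | self => simpa using h_last
  | of_succ i hi ih =>
    have h_step := norm_sub_le_of_infFeasible hL (by positivity) (h_stable i hi)
      (fun a => (norm_le_pi_norm _ a).trans ih) (h_feasible i hi)
    rwa [← mul_assoc, ← pow_succ', show d - (i + 1) + 1 = d - i by omega] at h_step

lemma netGaussian_layer_le (z : Fin (n 0) → ℝ)
    {S : ∀ i : Fin d, Set ((Fin (n i) → ℝ) × (Fin (n (i + 1)) → Fin (n i) → ℝ))}
    (i : Fin d) (hS : MeasurableSet (S i)) {p : ℝ≥0∞}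
    (hp : ∀ y, stdGaussianMatrix (n (i + 1)) (n i) {V | (y, V) ∈ S i} ≤ p) :
    netGaussian d n {W | (layerOut n (extendW d n W) i z, W i) ∈ S i} ≤ p := by
  have h_meas : MeasurableSet {W | (layerOut n (extendW d n W) i z, W i) ∈ S i} :=
    (measurable_layerOut_extendW z i).prodMk (measurable_pi_apply i) hS
  have h_congr (W W' : ∀ i : Fin d, Fin (n (i + 1)) → Fin (n i) → ℝ)
      (hW : ∀ j ∈ ({i}ᶜ : Finset (Fin d)), W j = W' j) :
      layerOut n (extendW d n W) i z = layerOut n (extendW d n W') i z :=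
    layerOut_congr z fun j hj => by
      have hji : (⟨j, hj.trans i.2⟩ : Fin d) ≠ i := fun h => hj.ne (congrArg Fin.val h)
      simpa [extendW, hj.trans i.2] using hW ⟨j, hj.trans i.2⟩ (by simpa using hji)
  have h_box := pi_dependentBox_le (fun i : Fin d => stdGaussianMatrix (n (i + 1)) (n i)) {i}ᶜ
    (fun _ => univ) (fun W j => {V | (layerOut n (extendW d n W) j z, V) ∈ S j})
    (q := fun _ => p) (fun W W' hW j hj => by
      obtain rfl : j = i := by simpa using hj
      rw [h_congr W W' hW])
    (fun W j hj => by
      obtain rfl : j = i := by simpa using hj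
      exact hp _)
    (by simpa using h_meas)
  simpa [netGaussian] using h_box

lemma succ_mul_le_of_five_mul_le (hn : ∀ i < d, 5 * n i ≤ n (i + 1)) {i : ℕ} (hi : i ≤ d) :
    (i + 1) * n 0 ≤ n i := by
  induction i with
  | zero => simp
  | succ i ih => nlinarith [ih (by omega), hn i (by omega)]

lemma sum_pow_le_pow_mul_inv {ρ : ℝ} (hρ₀ : 0 ≤ ρ) (hρ₁ : ρ < 1) (hn₀ : 0 < n 0)
    (hn : ∀ i < d, 5 * n i ≤ n (i + 1)) :
    ∑ i : Fin d, ρ ^ n i ≤ ρ ^ n 0 * (1 - ρ)⁻¹ := by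
  calc ∑ i : Fin d, ρ ^ n i ≤ ∑ i : Fin d, ρ ^ n 0 * ρ ^ (i : ℕ) := by
        refine Finset.sum_le_sum fun i _ => ?_
        rw [← pow_add]
        refine pow_le_pow_of_le_one hρ₀ hρ₁.le ?_
        nlinarith [succ_mul_le_of_five_mul_le hn i.2.le]
    _ = ρ ^ n 0 * ∑ i ∈ Finset.range d, ρ ^ i := by
        rw [← Finset.mul_sum, Fin.sum_univ_eq_sum_range (ρ ^ ·)]
    _ ≤ ρ ^ n 0 * (1 - ρ)⁻¹ := by
        gcongr
        rw [← tsum_geometric_of_lt_one hρ₀ hρ₁]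
        exact (summable_geometric_of_lt_one hρ₀ hρ₁).sum_le_tsum _ fun i _ => by positivity

lemma netGaussian_exists_unstable_le (hn₀ : 0 < n 0) (hn : ∀ i < d, 5 * n i ≤ n (i + 1))
    (z : Fin (n 0) → ℝ) {δ : ℕ → ℝ} (hδ : ∀ i, 0 ≤ δ i) :
    netGaussian d n {W | ∃ i : Fin d, (layerOut n (extendW d n W) i z, W i) ∈
      unstablePairs (Fin (n (i + 1))) (10 ^ 7) (δ i)} ≤
      ENNReal.ofReal (200 / 3 * Real.exp (-(3 / 200) * n 0)) := by
  have h_exp : (197 / 200 : ℝ) ^ n 0 ≤ Real.exp (-(3 / 200) * n 0) := by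
    rw [mul_comm, Real.exp_nat_mul]
    gcongr
    linarith [Real.one_sub_le_exp_neg (3 / 200)]
  calc _ ≤ ∑ i : Fin d, netGaussian d n {W | (layerOut n (extendW d n W) i z, W i) ∈
        unstablePairs (Fin (n (i + 1))) (10 ^ 7) (δ i)} := by
        rw [ofPred_exists]
        exact measure_iUnion_fintype_le _ _
    _ ≤ ∑ i : Fin d, ENNReal.ofReal ((197 / 200) ^ n i) := by
        refine Finset.sum_le_sum fun i _ => netGaussian_layer_le z i
          (S := fun i => unstablePairs (Fin (n (i + 1))) (10 ^ 7) (δ i))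
          (measurableSet_unstablePairs _ _) fun y => ?_
        simpa [stdGaussianMatrix] using
          pi_unstablePairs_le (ι := Fin (n (i + 1))) (by simpa using hn i i.2) (hδ i) y
    _ = ENNReal.ofReal (∑ i : Fin d, (197 / 200) ^ n i) :=
        (ENNReal.ofReal_sum_of_nonneg fun i _ => by positivity).symm
    _ ≤ _ := by
        refine ENNReal.ofReal_le_ofReal ?_
        have h_sum := sum_pow_le_pow_mul_inv (ρ := 197 / 200) (by norm_num) (by norm_num) hn₀ hn
        linarith [show ((1 : ℝ) - 197 / 200)⁻¹ = 200 / 3 by norm_num]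

end Network

theorem linf_recovery_random_gaussian_network_general :
    ∃ c₂ c C : ℝ, 0 < c₂ ∧ c₂ ≤ 2 ∧ 0 < c ∧ 0 < C ∧
      ∀ (d : ℕ) (n : ℕ → ℕ), 0 < n 0 → (∀ i < d, 5 * n i ≤ n (i + 1)) →
        ∀ (zstar : Fin (n 0) → ℝ) (ε : ℝ) (e : Fin (n d) → ℝ), ‖e‖ ≤ ε →
          1 - ENNReal.ofReal (C * Real.exp (-c * (n 0 : ℝ))) ≤
            netGaussian d n
              {W' |
                (∀ zh : ∀ j : ℕ, Fin (n j) → ℝ,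
                    zh d = (fun j => layerOut n (extendW d n W') d zstar j + e j) →
                    (∀ i < d,
                      InfFeasible (Matrix.of (extendW d n W' i)) (zh (i + 1))
                        ((2 / c₂) ^ (d - (i + 1)) * ε) (zh i)) →
                    ‖zh 0 - zstar‖ ≤ (2 / c₂) ^ d * ε) ∧
                (∃ zh : ∀ j : ℕ, Fin (n j) → ℝ,
                    zh d = (fun j => layerOut n (extendW d n W') d zstar j + e j) ∧
                    ∀ i < d,
                      InfFeasible (Matrix.of (extendW d n W' i)) (zh (i + 1))
                        ((2 / c₂) ^ (d - (i + 1)) * ε) (zh i))} := by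
  refine ⟨2 / 10 ^ 7, 3 / 200, 200 / 3, by norm_num, by norm_num, by norm_num, by norm_num,
    fun d n hn₀ hn zstar ε e he => ?_⟩
  have hε : 0 ≤ ε := (norm_nonneg e).trans he
  rw [show (2 / (2 / 10 ^ 7) : ℝ) = 10 ^ 7 by norm_num]
  refine (tsub_le_tsub_left (netGaussian_exists_unstable_le hn₀ hn zstar
    (δ := fun i => (10 ^ 7) ^ (d - (i + 1)) * ε) fun i => by positivity) 1).trans ?_
  rw [← measure_univ (μ := netGaussian d n), tsub_le_iff_right]
  refine (measure_mono fun W _ => ?_).trans (measure_union_le _ _)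
  refine or_iff_not_imp_right.2 fun h_stable => ⟨fun zh h_last h_feasible => ?_,
    exists_infFeasible_chain _ zstar he (by norm_num)⟩
  refine norm_sub_layerOut_le (by norm_num) ?_ (fun i hi h_mem => ?_) h_feasible d.zero_le
  · rwa [h_last, show (fun j => layerOut n (extendW d n W) d zstar j + e j) -
      layerOut n (extendW d n W) d zstar = e from add_sub_cancel_left _ e]
  · exact h_stable ⟨⟨i, hi⟩, by rwa [extendW_apply W ⟨i, hi⟩] at h_mem⟩

/-- **Corollary: `ℓ∞` recovery for random Gaussian networks.**
There are absolute constants `c₂ ∈ (0,2]`, `c > 0`, `C > 0` such that for any depth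
`d ≥ 1`, layer sizes `n 0 = k > 0` and `n (i+1) ≥ 5·n i`, independent i.i.d. standard
Gaussian weights, any `z* ∈ ℝ^k` and noise `e` with `‖e‖_∞ = ε` where
`ε < (c₂^d/2^{d+4})·‖z*‖₂·√k`, with probability at least `1 − C·exp(−c·k)`: every
layer-wise feasibility chain `ẑ d = G(z*)+e, …, ẑ 0` (with tolerances
`ε_{i+1} = (2/c₂)^{d−(i+1)}·ε`) satisfies `‖ẑ 0 − z*‖_∞ ≤ (2/c₂)^d·ε`, and at least one
such chain exists. -/
theorem linf_recovery_random_gaussian_network :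
    ∃ c₂ c C : ℝ, 0 < c₂ ∧ c₂ ≤ 2 ∧ 0 < c ∧ 0 < C ∧
      ∀ (d : ℕ), 1 ≤ d → ∀ (n : ℕ → ℕ) (k : ℕ), n 0 = k → 0 < k →
        (∀ i < d, 5 * n i ≤ n (i + 1)) →
        ∀ (zstar : Fin (n 0) → ℝ) (ε : ℝ) (e : Fin (n d) → ℝ), ‖e‖ = ε →
          ε < c₂ ^ d / 2 ^ (d + 4) * Real.sqrt (∑ j, zstar j ^ 2) * Real.sqrt k →
          1 - ENNReal.ofReal (C * Real.exp (-c * (k : ℝ))) ≤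
            netGaussian d n
              {W' |
                (∀ zh : ∀ j : ℕ, Fin (n j) → ℝ,
                    zh d = (fun j => layerOut n (extendW d n W') d zstar j + e j) →
                    (∀ i < d,
                      InfFeasible (Matrix.of (extendW d n W' i)) (zh (i + 1))
                        ((2 / c₂) ^ (d - (i + 1)) * ε) (zh i)) →
                    ‖zh 0 - zstar‖ ≤ (2 / c₂) ^ d * ε) ∧
                (∃ zh : ∀ j : ℕ, Fin (n j) → ℝ,
                    zh d = (fun j => layerOut n (extendW d n W') d zstar j + e j) ∧
                    ∀ i < d,
                      InfFeasible (Matrix.of (extendW d n W' i)) (zh (i + 1))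
                        ((2 / c₂) ^ (d - (i + 1)) * ε) (zh i))} := by
  obtain ⟨c₂, c, C, hc₂_pos, hc₂_le, hc, hC, h_recovery⟩ :=
    linf_recovery_random_gaussian_network_general
  refine ⟨c₂, c, C, hc₂_pos, hc₂_le, hc, hC, ?_⟩
  rintro d - n _ rfl hn₀ hn zstar ε e he -
  exact h_recovery d n hn₀ hn zstar ε e he.le
end

section
/- (Approximate inversion of a single noisy ReLU layer in ℓ1.) Let W ∈ ℝ^{n×k} with rows w_1,…,w_n, let m > k be an integer and c₁ > 0 a constant, and suppose W (m,c₁)-extends the ℓ1 norm. Let z* ∈ ℝ^k, let e ∈ ℝ^n with ‖e‖₁ ≤ ε, and set x = ReLU(Wz*) + e. Assume ReLU(Wz*) has at least m coordinates strictly greater than 2ε, and let I = {j : x_j > ε}. Then |I| ≥ m, W_{I,:}z* = x*_I where x* = ReLU(Wz*), and every z ∈ ℝ^k with Σ_{j∈I} |w_j·z − x_j| ≤ Σ_{j∈I} |w_j·z* − x_j| satisfies ‖z − z*‖₁ ≤ 2ε/c₁. (In particular, this holds for any minimizer of Σ_{j∈I}|w_j·z − x_j|, e.g. the output of the ℓ1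 linear program.) -/
/-- `W` `(m,c₁)`-extends the `ℓ1` norm: for every index set `I` with `|I| ≥ m` and every
`a ∈ ℝ^k`, `‖W_{I,:}a‖₁ ≥ c₁‖a‖₁`. -/
def ExtendsL1 {n k : ℕ} (W : Matrix (Fin n) (Fin k) ℝ) (m : ℕ) (c₁ : ℝ) : Prop :=
  ∀ I : Finset (Fin n), m ≤ I.card →
    ∀ a : Fin k → ℝ, c₁ * ∑ j, |a j| ≤ ∑ i ∈ I, |W.mulVec a i|

/-!
Every entry of the noise is at most `ε` in absolute value. Hence every coordinate of the clean
signal above `2ε` is observed above `ε`, and a coordinate observed above `ε` comes from a positive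
clean value, where `ReLU` acts as the identity. On `I` the layer is therefore linear at `z*` and its
residual is `-e`, so `z` and `z*` both have `ℓ1` residual at most `ε` there. By the triangle
inequality `‖W_{I,:}(z - z*)‖₁ ≤ 2ε`, and the extension property bounds `‖z - z*‖₁`.
-/

section OrderedGroup

variable {ι G : Type*} [AddCommGroup G] [LinearOrder G] [IsOrderedAddMonoid G]

theorem abs_apply_le_of_sum_abs_le [Fintype ι] {e : ι → G} {ε : G} (he : ∑ j, |e j| ≤ ε) (j : ι) :
    |e j| ≤ ε :=
  (Finset.single_le_sum (fun i _ ↦ abs_nonneg (e i)) (Finset.mem_univ j)).trans he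

theorem filter_add_lt_subset_filter_lt_add (s : Finset ι) (y : ι → G) {e : ι → G} {δ : G}
    (he : ∀ j ∈ s, |e j| ≤ δ) (τ : G) :
    {j ∈ s | τ + δ < y j} ⊆ {j ∈ s | τ < y j + e j} := by
  intro j hj
  rw [Finset.mem_filter] at hj ⊢
  refine ⟨hj.1, ?_⟩
  calc
    τ < y j - δ := lt_sub_iff_add_lt.mpr hj.2
    _ = y j + -δ := sub_eq_add_neg _ _
    _ ≤ y j + e j := by gcongr; exact neg_le_of_abs_le (he j hj.1)

theorem sum_abs_sub_le_sum_abs_sub_add_sum_abs_sub (s : Finset ι) (u v x : ι → G) :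
    ∑ j ∈ s, |u j - v j| ≤ ∑ j ∈ s, |u j - x j| + ∑ j ∈ s, |v j - x j| := by
  rw [← Finset.sum_add_distrib]
  gcongr with j
  rw [abs_sub_comm (v j)]
  exact abs_sub_le _ _ _

end OrderedGroup

section Relu

theorem relu_eq_self_of_lt_relu_add {t δ ε : ℝ} (hδ : |δ| ≤ ε) (ht : ε < relu t + δ) :
    relu t = t :=
  relu_eq_self_of_relu_pos (pos_of_lt_add_left (((le_abs_self δ).trans hδ).trans_lt ht))

theorem sum_abs_sub_relu_add_eq_sum_abs {ι : Type*} {s : Finset ι} {y : ι → ℝ}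
    (hy : ∀ j ∈ s, relu (y j) = y j) (e : ι → ℝ) :
    ∑ j ∈ s, |y j - (relu (y j) + e j)| = ∑ j ∈ s, |e j| :=
  Finset.sum_congr rfl fun j hj ↦ by rw [hy j hj, sub_add_cancel_left, abs_neg]

end Relu

namespace ExtendsL1

variable {n k m : ℕ} {W : Matrix (Fin n) (Fin k) ℝ} {c₁ : ℝ} {I : Finset (Fin n)}

theorem mul_sum_abs_sub_le (hW : ExtendsL1 W m c₁) (hI : m ≤ I.card) (z z' : Fin k → ℝ)
    (x : Fin n → ℝ) :
    c₁ * ∑ j, |z j - z' j| ≤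
      ∑ i ∈ I, |W.mulVec z i - x i| + ∑ i ∈ I, |W.mulVec z' i - x i| :=
  calc
    c₁ * ∑ j, |z j - z' j| ≤ ∑ i ∈ I, |W.mulVec (z - z') i| := hW I hI (z - z')
    _ = ∑ i ∈ I, |W.mulVec z i - W.mulVec z' i| := by simp only [Matrix.mulVec_sub, Pi.sub_apply]
    _ ≤ _ := sum_abs_sub_le_sum_abs_sub_add_sum_abs_sub I _ _ x

theorem sum_abs_sub_le_two_mul_div (hW : ExtendsL1 W m c₁) (hc : 0 < c₁) (hI : m ≤ I.card)
    {z z' : Fin k → ℝ} {x : Fin n → ℝ} {ε : ℝ}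
    (hz : ∑ i ∈ I, |W.mulVec z i - x i| ≤ ε) (hz' : ∑ i ∈ I, |W.mulVec z' i - x i| ≤ ε) :
    ∑ j, |z j - z' j| ≤ 2 * ε / c₁ := by
  rw [le_div_iff₀' hc, two_mul]
  exact (hW.mul_sum_abs_sub_le hI z z' x).trans (add_le_add hz hz')

end ExtendsL1

/-- **Approximate inversion of a single noisy ReLU layer in `ℓ1`.**
Suppose `W` `(m,c₁)`-extends the `ℓ1` norm with `m > k`, `x = ReLU(Wz*) + e` with
`‖e‖₁ ≤ ε`, and `ReLU(Wz*)` has at least `m` coordinates strictly greater than `2ε`.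
With `I = {j : x_j > ε}` one has `|I| ≥ m`, `W_{I,:}z* = (ReLU(Wz*))_I`, and every `z`
whose `ℓ1` data-fit on `I` is no worse than that of `z*` satisfies
`‖z − z*‖₁ ≤ 2ε/c₁`. -/
theorem single_layer_noisy_relu_l1_inversion
    (n k m : ℕ) (W : Matrix (Fin n) (Fin k) ℝ) (c₁ ε : ℝ)
    (hc : 0 < c₁) (hm : k < m) (hext : ExtendsL1 W m c₁)
    (zstar : Fin k → ℝ) (e : Fin n → ℝ) (he : ∑ j, |e j| ≤ ε)
    (x : Fin n → ℝ) (hx : x = fun j => relu (W.mulVec zstar j) + e j)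
    (hbig : m ≤ (Finset.univ.filter fun j => 2 * ε < relu (W.mulVec zstar j)).card) :
    m ≤ (Finset.univ.filter fun j => ε < x j).card ∧
    (∀ j ∈ Finset.univ.filter fun j => ε < x j,
      W.mulVec zstar j = relu (W.mulVec zstar j)) ∧
    (∀ z : Fin k → ℝ,
      (∑ j ∈ Finset.univ.filter fun j => ε < x j, |W.mulVec z j - x j|) ≤
        (∑ j ∈ Finset.univ.filter fun j => ε < x j, |W.mulVec zstar j - x j|) →
      ∑ j, |z j - zstar j| ≤ 2 * ε / c₁) := by
  subst hx
  have noise_le : ∀ j, |e j| ≤ ε := abs_apply_le_of_sum_abs_le he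
  set I := Finset.univ.filter fun j => ε < relu (W.mulVec zstar j) + e j
  have card_I : m ≤ I.card := by
    rw [two_mul] at hbig
    exact hbig.trans (Finset.card_le_card
      (filter_add_lt_subset_filter_lt_add _ _ (fun j _ ↦ noise_le j) ε))
  have relu_eq : ∀ j ∈ I, relu (W.mulVec zstar j) = W.mulVec zstar j := fun j hj ↦
    relu_eq_self_of_lt_relu_add (noise_le j) (Finset.mem_filter.mp hj).2
  have residual_le : ∑ j ∈ I, |W.mulVec zstar j - (relu (W.mulVec zstar j) + e j)| ≤ ε :=
    calc
      _ = ∑ j ∈ I, |e j| := sum_abs_sub_relu_add_eq_sum_abs relu_eq e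
      _ ≤ ∑ j, |e j| := Finset.sum_le_univ_sum_of_nonneg fun j ↦ abs_nonneg (e j)
      _ ≤ ε := he
  exact ⟨card_I, fun j hj ↦ (relu_eq j hj).symm, fun z hz ↦
    hext.sum_abs_sub_le_two_mul_div hc card_I (hz.trans residual_le) residual_le⟩
end
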